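/- arXiv:1008.2398 — 4 statements merged into one kernel-verified Lean document; each statement's English description precedes it below -/
import Mathlib

section
/- For any cone C in ℝ³ with convex base K and apex v, the ratio Vol(C)/Vol(DC) is at most 4/7, where DC is the difference body of C; moreover if K is not centrally symmetric this ratio is strictly less than 4/7. -/
open MeasureTheory Pointwise
open scoped ENNReal

/-!
The heart of the matter is the multiplicative Brunn–Minkowski inequality
`μ(A) ^ a * μ(B) ^ b ≤ μ(aA + bB)`, `a + b = 1`, for compact convex sets. Slice along a linear
functional and let `T` be the increasing map transporting the normalised slice density of `A` to
that of `B`. The slice of `aA + bB` at `ax + bT(x)` contains the combination of the slices of `A` at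
`x` and of `B` at `T(x)`, so induction on the dimension reduces the inequality to
`(T') ^ b ≤ a + bT'`. In the equality case `T' = 1`, so all one-dimensional marginals of the uniform
measures on `A` and `B` agree up to translation. The translations are those of the barycentres, and
by Cramér–Wold `B` is a translate of `A`.

Put the apex of the cone `C` at the origin and its base `K` at height `1`. For `0 ≤ s ≤ 1` the slice
of `C - C` at height `s` contains `K - (1 - s)K`, whose volume is at least `(2 - s) ^ n * Vol(K)`,
strictly more for `0 < s < 1` unless `-K` is a translate of `K`. Since `C - C` is symmetric,
`Vol(C - C) ≥ 2 ∫₀¹ (2 - s) ^ n ds * Vol(K) = 2 (2 ^ (n + 1) - 1) Vol(C)`, and for `n = 2` this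
is the ratio `4 / 7`.
-/

open Set Module ProbabilityTheory

section Transport

variable {f g h φ Φ : ℝ → ℝ} {α β γ δ a b : ℝ}

/-- `f` is a probability density on the line that is continuous and positive on `(α, β)` and
vanishes outside `[α, β]`. The values at the two endpoints are left free. -/
structure IsIntervalDensity (f : ℝ → ℝ) (α β : ℝ) : Prop where
  lt : α < β
  continuousOn : ContinuousOn f (Ioo α β)
  pos : ∀ x ∈ Ioo α β, 0 < f x
  eq_zero : ∀ x ∉ Icc α β, f x = 0
  integral_eq_one : ∫ x, f x = 1

namespace IsIntervalDensity

theorem integrable (hf : IsIntervalDensity f α β) : Integrable f :=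
  .of_integral_ne_zero (hf.integral_eq_one.trans_ne one_ne_zero)

theorem setIntegral_eq_one (hf : IsIntervalDensity f α β) : ∫ x in Ioo α β, f x = 1 := by
  rw [← integral_Icc_eq_integral_Ioo, setIntegral_eq_integral_of_forall_compl_eq_zero hf.eq_zero,
    hf.integral_eq_one]

theorem exists_cdf (hf : IsIntervalDensity f α β) :
    ∃ Φ : ℝ → ℝ, BijOn Φ (Ioo α β) (Ioo 0 1) ∧ StrictMonoOn Φ (Ioo α β) ∧
      ∀ x ∈ Ioo α β, HasDerivAt Φ (f x) x := by
  have hint (x y : ℝ) : IntervalIntegrable f volume x y := hf.integrable.intervalIntegrable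
  let Φ : ℝ → ℝ := fun x ↦ ∫ t in α..x, f t
  have hα : Φ α = 0 := intervalIntegral.integral_same
  have hβ : Φ β = 1 := by
    simp only [Φ, intervalIntegral.integral_of_le hf.lt.le, integral_Ioc_eq_integral_Ioo,
      hf.setIntegral_eq_one]
  have hmono : StrictMonoOn Φ (Icc α β) := by
    intro x hx y hy hxy
    have hsub : Φ y - Φ x = ∫ t in x..y, f t :=
      intervalIntegral.integral_interval_sub_left (hint _ _) (hint _ _)
    have hpos : 0 < ∫ t in x..y, f t := intervalIntegral.intervalIntegral_pos_of_pos_on (hint _ _)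
      (fun t ht ↦ hf.pos t ⟨hx.1.trans_lt ht.1, ht.2.trans_le hy.2⟩) hxy
    linarith
  have hcont : ContinuousOn Φ (Icc α β) :=
    (intervalIntegral.continuous_primitive hint α).continuousOn
  have hmaps : MapsTo Φ (Ioo α β) (Ioo 0 1) := fun x hx ↦
    ⟨hα ▸ hmono (left_mem_Icc.2 hf.lt.le) (Ioo_subset_Icc_self hx) hx.1,
      hβ ▸ hmono (Ioo_subset_Icc_self hx) (right_mem_Icc.2 hf.lt.le) hx.2⟩
  have hsurj : SurjOn Φ (Ioo α β) (Ioo 0 1) := by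
    simpa only [SurjOn, hα, hβ] using intermediate_value_Ioo hf.lt.le hcont
  have hmono' := hmono.mono Ioo_subset_Icc_self
  refine ⟨Φ, ⟨hmaps, hmono'.injOn, hsurj⟩, hmono', fun x hx ↦ ?_⟩
  exact intervalIntegral.integral_hasDerivAt_right (hint _ _)
    (hf.continuousOn.stronglyMeasurableAtFilter isOpen_Ioo x hx)
    (hf.continuousOn.continuousAt (isOpen_Ioo.mem_nhds hx))

end IsIntervalDensity

theorem exists_inverse_bijOn_hasDerivAt {S T : Set ℝ} (hΦ : StrictMonoOn Φ S)
    (hST : BijOn Φ S T) (hS : IsOpen S) (hT : IsOpen T) (hφ : ∀ x ∈ S, φ x ≠ 0)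
    (hderiv : ∀ x ∈ S, HasDerivAt Φ (φ x) x) :
    ∃ Ψ : ℝ → ℝ, BijOn Ψ T S ∧ StrictMonoOn Ψ T ∧ ∀ y ∈ T, HasDerivAt Ψ (φ (Ψ y))⁻¹ y := by
  obtain ⟨Ψ, hinv⟩ : ∃ Ψ, InvOn Ψ Φ S T := ⟨_, hST.invOn_invFunOn⟩
  have hTS : BijOn Ψ T S := hST.symm hinv.symm
  have hmono : StrictMonoOn Ψ T := fun x hx y hy hxy ↦ by
    rwa [← hΦ.lt_iff_lt (hTS.mapsTo hx) (hTS.mapsTo hy), hinv.2 hx, hinv.2 hy]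
  refine ⟨Ψ, hTS, hmono, fun y hy ↦ ?_⟩
  have hcont : ContinuousAt Ψ y := hmono.continuousAt_of_image_mem_nhds (hT.mem_nhds hy) <| by
    rw [hTS.image_eq]
    exact hS.mem_nhds (hTS.mapsTo hy)
  refine (hderiv _ (hTS.mapsTo hy)).of_local_left_inverse hcont (hφ _ (hTS.mapsTo hy)) ?_
  filter_upwards [hT.mem_nhds hy] with z hz using hinv.2 hz

theorem IsIntervalDensity.exists_transport (hf : IsIntervalDensity f α β)
    (hg : IsIntervalDensity g γ δ) :
    ∃ T : ℝ → ℝ, BijOn T (Ioo α β) (Ioo γ δ) ∧ StrictMonoOn T (Ioo α β) ∧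
      ∀ x ∈ Ioo α β, HasDerivAt T (f x / g (T x)) x := by
  obtain ⟨Φ, hΦ, hΦmono, hΦderiv⟩ := hf.exists_cdf
  obtain ⟨Γ, hΓ, hΓmono, hΓderiv⟩ := hg.exists_cdf
  obtain ⟨Ψ, hΨ, hΨmono, hΨderiv⟩ := exists_inverse_bijOn_hasDerivAt hΓmono hΓ isOpen_Ioo
    isOpen_Ioo (fun y hy ↦ (hg.pos y hy).ne') hΓderiv
  refine ⟨Ψ ∘ Φ, hΨ.comp hΦ, hΨmono.comp hΦmono hΦ.mapsTo, fun x hx ↦ ?_⟩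
  rw [div_eq_inv_mul]
  exact (hΨderiv _ (hΦ.mapsTo hx)).comp x (hΦderiv x hx)

section WeightedMean

variable {u w : ℝ}

theorem eq_rpow_div_mul_rpow_mul_rpow (hu : 0 < u) (hw : 0 < w) (hab : a + b = 1) :
    u = (u / w) ^ b * (u ^ a * w ^ b) := by
  rw [Real.div_rpow hu.le hw.le, mul_left_comm, div_mul_cancel₀ _ (by positivity),
    ← Real.rpow_add hu, hab, Real.rpow_one]

theorem le_add_mul_div_mul_rpow_mul_rpow (hu : 0 < u) (hw : 0 < w) (ha : 0 ≤ a) (hb : 0 ≤ b)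
    (hab : a + b = 1) : u ≤ (a + b * (u / w)) * (u ^ a * w ^ b) := by
  conv_lhs => rw [eq_rpow_div_mul_rpow_mul_rpow hu hw hab]
  gcongr
  simpa using Real.geom_mean_le_arith_mean2_weighted ha hb zero_le_one (by positivity : 0 ≤ u / w)
    hab

theorem eq_of_eq_add_mul_div_mul_rpow_mul_rpow (hu : 0 < u) (hw : 0 < w) (ha : 0 < a) (hb : 0 < b)
    (hab : a + b = 1) (h : u = (a + b * (u / w)) * (u ^ a * w ^ b)) : u = w := by
  conv_lhs at h => rw [eq_rpow_div_mul_rpow_mul_rpow hu hw hab]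
  have hmean : (1 : ℝ) ^ a * (u / w) ^ b = a * 1 + b * (u / w) := by
    simpa using mul_right_cancel₀ (by positivity) h
  have hone : 1 = u / w := (Real.geom_mean_eq_arith_mean2_weighted_iff_of_pos ha hb zero_le_one
    (by positivity) hab).1 hmean
  exact (div_eq_one_iff_eq hw.ne').1 hone.symm

end WeightedMean

theorem integrableOn_and_setIntegral_le_of_le_abs_deriv_mul {S : Set ℝ} {M M' k : ℝ → ℝ}
    (hS : MeasurableSet S) (hM : ∀ x ∈ S, HasDerivWithinAt M (M' x) S x) (hMinj : InjOn M S)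
    (h_int : Integrable h) (h_nonneg : 0 ≤ h) (hk : AEStronglyMeasurable k (volume.restrict S))
    (hk_nonneg : ∀ x ∈ S, 0 ≤ k x) (hle : ∀ x ∈ S, k x ≤ |M' x| * h (M x)) :
    IntegrableOn k S ∧ ∫ x in S, k x ≤ ∫ x, h x := by
  have hdom : IntegrableOn (fun x ↦ |M' x| • h (M x)) S :=
    (integrableOn_image_iff_integrableOn_abs_deriv_smul hS hM hMinj h).1 h_int.integrableOn
  have hint : IntegrableOn k S := by
    refine hdom.mono' hk ?_
    filter_upwards [ae_restrict_mem hS] with x hx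
    exact (Real.norm_of_nonneg (hk_nonneg x hx)).trans_le (hle x hx)
  refine ⟨hint, ?_⟩
  calc ∫ x in S, k x
      ≤ ∫ x in S, |M' x| • h (M x) := setIntegral_mono_on hint hdom hS hle
    _ = ∫ x in M '' S, h x := (integral_image_eq_integral_abs_deriv_smul hS hM hMinj h).symm
    _ ≤ ∫ x, h x := setIntegral_le_integral h_int (.of_forall h_nonneg)

-- Change of variables along `x ↦ a * x + b * T x`.
theorem IsIntervalDensity.exists_transport_setIntegral_le (hf : IsIntervalDensity f α β)
    (hg : IsIntervalDensity g γ δ) (ha : 0 < a) (hb : 0 < b) (h_int : Integrable h)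
    (h_nonneg : 0 ≤ h)
    (hfgh : ∀ x ∈ Ioo α β, ∀ y ∈ Ioo γ δ, f x ^ a * g y ^ b ≤ h (a * x + b * y)) :
    ∃ T : ℝ → ℝ, BijOn T (Ioo α β) (Ioo γ δ) ∧
      (∀ x ∈ Ioo α β, HasDerivAt T (f x / g (T x)) x) ∧
      IntegrableOn (fun x ↦ (a + b * (f x / g (T x))) * (f x ^ a * g (T x) ^ b)) (Ioo α β) ∧
      ∫ x in Ioo α β, (a + b * (f x / g (T x))) * (f x ^ a * g (T x) ^ b) ≤ ∫ x, h x := by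
  obtain ⟨T, hT, hTmono, hTderiv⟩ := hf.exists_transport hg
  have hTpos (x) (hx : x ∈ Ioo α β) : 0 < g (T x) := hg.pos _ (hT.mapsTo hx)
  have hTcont : ContinuousOn T (Ioo α β) := fun x hx ↦
    (hTderiv x hx).continuousAt.continuousWithinAt
  have hgT : ContinuousOn (fun x ↦ g (T x)) (Ioo α β) := hg.continuousOn.comp hTcont hT.mapsTo
  have hM (x) (hx : x ∈ Ioo α β) : HasDerivWithinAt (fun x ↦ a * x + b * T x)
      (a + b * (f x / g (T x))) (Ioo α β) x := by
    simpa only [mul_one] using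
      (((hasDerivAt_id' x).const_mul a).fun_add ((hTderiv x hx).const_mul b)).hasDerivWithinAt
  have hM_pos (x) (hx : x ∈ Ioo α β) : 0 < a + b * (f x / g (T x)) := by
    have := hf.pos x hx
    have := hTpos x hx
    positivity
  have hMinj : InjOn (fun x ↦ a * x + b * T x) (Ioo α β) :=
    StrictMonoOn.injOn fun x hx y hy hxy ↦
      add_lt_add (mul_lt_mul_of_pos_left hxy ha) (mul_lt_mul_of_pos_left (hTmono hx hy hxy) hb)
  have hcont : ContinuousOn (fun x ↦ (a + b * (f x / g (T x))) * (f x ^ a * g (T x) ^ b))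
      (Ioo α β) :=
    (continuousOn_const.add (continuousOn_const.mul
      (hf.continuousOn.div hgT fun x hx ↦ (hTpos x hx).ne'))).mul
      ((hf.continuousOn.rpow_const fun x _ ↦ .inr ha.le).mul
        (hgT.rpow_const fun x _ ↦ .inr hb.le))
  refine ⟨T, hT, hTderiv, integrableOn_and_setIntegral_le_of_le_abs_deriv_mul measurableSet_Ioo hM
    hMinj h_int h_nonneg (hcont.aestronglyMeasurable measurableSet_Ioo) (fun x hx ↦ ?_)
    fun x hx ↦ ?_⟩
  · have := hf.pos x hx
    have := hTpos x hx
    positivity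
  · rw [abs_of_pos (hM_pos x hx)]
    exact mul_le_mul_of_nonneg_left (hfgh x hx _ (hT.mapsTo hx)) (hM_pos x hx).le

theorem IsIntervalDensity.one_le_integral_of_rpow_mul_rpow_le (hf : IsIntervalDensity f α β)
    (hg : IsIntervalDensity g γ δ) (ha : 0 < a) (hb : 0 < b) (hab : a + b = 1)
    (h_int : Integrable h) (h_nonneg : 0 ≤ h)
    (hfgh : ∀ x ∈ Ioo α β, ∀ y ∈ Ioo γ δ, f x ^ a * g y ^ b ≤ h (a * x + b * y)) :
    1 ≤ ∫ x, h x := by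
  obtain ⟨T, hT, -, hint, hle⟩ := hf.exists_transport_setIntegral_le hg ha hb h_int h_nonneg hfgh
  refine le_trans ?_ hle
  rw [← hf.setIntegral_eq_one]
  exact setIntegral_mono_on hf.integrable.integrableOn hint measurableSet_Ioo fun x hx ↦
    le_add_mul_div_mul_rpow_mul_rpow (hf.pos x hx) (hg.pos _ (hT.mapsTo hx)) ha.le hb.le hab

theorem exists_eq_add_of_hasDerivAt_one {T : ℝ → ℝ} (hT : ∀ x ∈ Ioo α β, HasDerivAt T 1 x) :
    ∃ d, ∀ x ∈ Ioo α β, T x = x + d := by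
  have hderiv (x) (hx : x ∈ Ioo α β) : HasDerivAt (fun x ↦ T x - x) 0 x := by
    simpa using (hT x hx).fun_sub (hasDerivAt_id' x)
  obtain ⟨d, hd⟩ := isOpen_Ioo.exists_is_const_of_deriv_eq_zero isPreconnected_Ioo
    (fun x hx ↦ (hderiv x hx).differentiableAt.differentiableWithinAt)
    fun x hx ↦ (hderiv x hx).deriv
  exact ⟨d, fun x hx ↦ by linarith [hd x hx]⟩

theorem IsIntervalDensity.ae_eq_translate (hf : IsIntervalDensity f α β)
    (hg : IsIntervalDensity g γ δ) {d : ℝ} (hmaps : BijOn (· + d) (Ioo α β) (Ioo γ δ))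
    (hfg : ∀ x ∈ Ioo α β, f x = g (x + d)) : ∀ᵐ x, g (x + d) = f x := by
  have hends : Ioo (α + d) (β + d) = Ioo γ δ := by rw [← hmaps.image_eq, image_add_const_Ioo]
  have hlt : α + d < β + d := add_lt_add_left hf.lt d
  obtain rfl : α + d = γ := by rw [← csInf_Ioo hlt, hends, csInf_Ioo hg.lt]
  obtain rfl : β + d = δ := by rw [← csSup_Ioo hlt, hends, csSup_Ioo hg.lt]
  have hne (e : ℝ) : ∀ᵐ x, x ≠ e := by simp [ae_iff]
  filter_upwards [hne α, hne β] with x hxα hxβ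
  by_cases hx : x ∈ Icc α β
  · exact (hfg x ⟨lt_of_le_of_ne hx.1 hxα.symm, lt_of_le_of_ne hx.2 hxβ⟩).symm
  · rw [hf.eq_zero x hx, hg.eq_zero _ fun hxd ↦ hx ?_]
    simpa using hxd

theorem IsIntervalDensity.exists_ae_eq_translate_of_integral_le_one (hf : IsIntervalDensity f α β)
    (hg : IsIntervalDensity g γ δ) (ha : 0 < a) (hb : 0 < b) (hab : a + b = 1)
    (h_int : Integrable h) (h_nonneg : 0 ≤ h)
    (hfgh : ∀ x ∈ Ioo α β, ∀ y ∈ Ioo γ δ, f x ^ a * g y ^ b ≤ h (a * x + b * y))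
    (h_le : ∫ x, h x ≤ 1) : ∃ d, ∀ᵐ x, g (x + d) = f x := by
  obtain ⟨T, hT, hTderiv, hint, hle⟩ :=
    hf.exists_transport_setIntegral_le hg ha hb h_int h_nonneg hfgh
  have hTpos (x) (hx : x ∈ Ioo α β) : 0 < g (T x) := hg.pos _ (hT.mapsTo hx)
  have hmean (x) (hx : x ∈ Ioo α β) := le_add_mul_div_mul_rpow_mul_rpow (hf.pos x hx) (hTpos x hx)
    ha.le hb.le hab
  have hae : f =ᵐ[volume.restrict (Ioo α β)]
      fun x ↦ (a + b * (f x / g (T x))) * (f x ^ a * g (T x) ^ b) := by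
    refine (integral_eq_iff_of_ae_le hf.integrable.integrableOn hint
      (ae_restrict_of_forall_mem measurableSet_Ioo hmean)).1 (le_antisymm ?_ ?_)
    · exact setIntegral_mono_on hf.integrable.integrableOn hint measurableSet_Ioo hmean
    · rw [hf.setIntegral_eq_one]
      exact hle.trans h_le
  have hTcont : ContinuousOn T (Ioo α β) := fun x hx ↦
    (hTderiv x hx).continuousAt.continuousWithinAt
  have hfgT : EqOn f (fun x ↦ g (T x)) (Ioo α β) := by
    refine Measure.eqOn_open_of_ae_eq (μ := volume) ?_ isOpen_Ioo hf.continuousOn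
      (hg.continuousOn.comp hTcont hT.mapsTo)
    filter_upwards [hae, ae_restrict_mem measurableSet_Ioo] with x hx hxI
    exact eq_of_eq_add_mul_div_mul_rpow_mul_rpow (hf.pos x hxI) (hTpos x hxI) ha hb hab hx
  obtain ⟨d, hd⟩ := exists_eq_add_of_hasDerivAt_one (T := T) (α := α) (β := β) fun x hx ↦ by
    simpa only [← hfgT hx, div_self (hf.pos x hx).ne'] using hTderiv x hx
  exact ⟨d, hf.ae_eq_translate hg (hT.congr hd) fun x hx ↦ hd x hx ▸ hfgT hx⟩

end Transport

/-- The multiplicative form of the Brunn–Minkowski inequality for `μ`, restricted to compact convex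
sets; every Haar measure satisfies it by `logConcaveOnConvexBodies_addHaar`. -/
def LogConcaveOnConvexBodies {E : Type*} [AddCommGroup E] [Module ℝ E] [TopologicalSpace E]
    [MeasurableSpace E] (μ : Measure E) : Prop :=
  ∀ ⦃A B : Set E⦄, IsCompact A → Convex ℝ A → IsCompact B → Convex ℝ B →
    ∀ ⦃a b : ℝ⦄, 0 < a → 0 < b → a + b = 1 →
      μ.real A ^ a * μ.real B ^ b ≤ μ.real (a • A + b • B)

section Slices

theorem isCompact_preimage_prodMk {X Y : Type*} [TopologicalSpace X] [T1Space X]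
    [TopologicalSpace Y] {A : Set (X × Y)} {x : X} (hA : IsCompact A) :
    IsCompact (Prod.mk x ⁻¹' A) := by
  refine Topology.IsClosedEmbedding.isCompact_preimage ⟨isEmbedding_prodMkRight x, ?_⟩ hA
  rw [show range (Prod.mk x : Y → X × Y) = Prod.fst ⁻¹' {x} by ext ⟨_, _⟩; simp [eq_comm]]
  exact isClosed_singleton.preimage continuous_fst

variable {F : Type*} [NormedAddCommGroup F] [NormedSpace ℝ F] {A B : Set (ℝ × F)} {a b x y : ℝ}

theorem convex_preimage_prodMk (hA : Convex ℝ A) : Convex ℝ (Prod.mk x ⁻¹' A) :=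
  hA.affine_preimage ((AffineMap.const ℝ F x).prod (AffineMap.id ℝ F))

theorem smul_slice_add_smul_slice_subset :
    a • (Prod.mk x ⁻¹' A) + b • (Prod.mk y ⁻¹' B) ⊆
      Prod.mk (a * x + b * y) ⁻¹' (a • A + b • B) := by
  rintro _ ⟨_, ⟨p, hp, rfl⟩, _, ⟨q, hq, rfl⟩, rfl⟩
  exact ⟨_, smul_mem_smul_set hp, _, smul_mem_smul_set hq, by simp⟩

theorem image_fst_interior (hA : Convex ℝ A) (hA' : (interior A).Nonempty) :
    Prod.fst '' interior A = interior (Prod.fst '' A) := by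
  refine subset_antisymm (isOpenMap_fst.image_interior_subset A) ?_
  have hconv : Convex ℝ (Prod.fst '' interior A) :=
    hA.interior.linear_image (LinearMap.fst ℝ ℝ F)
  have hopen : IsOpen (Prod.fst '' interior A) := isOpenMap_fst _ isOpen_interior
  calc interior (Prod.fst '' A)
      ⊆ interior (Prod.fst '' closure (interior A)) := interior_mono <| image_mono <| by
        rw [hA.closure_interior_eq_closure_of_nonempty_interior hA']
        exact subset_closure
    _ ⊆ interior (closure (Prod.fst '' interior A)) :=
        interior_mono (image_closure_subset_closure_image continuous_fst)
    _ = Prod.fst '' interior A := by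
        rw [hconv.interior_closure_eq_interior_of_nonempty_interior
          (hopen.interior_eq.symm ▸ hA'.image _), hopen.interior_eq]

variable [MeasurableSpace F] {ν : Measure F}

omit [NormedSpace ℝ F] in
theorem measureReal_slice_pos [ν.IsAddHaarMeasure] (hA : IsCompact A)
    (hx : x ∈ Prod.fst '' interior A) :
    0 < ν.real (Prod.mk x ⁻¹' A) := by
  obtain ⟨⟨x, z⟩, hp, rfl⟩ := hx
  have hopen : IsOpen (Prod.mk x ⁻¹' interior A) :=
    isOpen_interior.preimage (Continuous.prodMk_right x)
  refine ENNReal.toReal_pos ?_ (isCompact_preimage_prodMk hA).measure_lt_top.ne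
  exact ((hopen.measure_pos ν ⟨z, hp⟩).trans_le
    (measure_mono (preimage_mono interior_subset))).ne'

theorem rpow_mul_rpow_measureReal_slice_le [IsFiniteMeasureOnCompacts ν]
    (hν : LogConcaveOnConvexBodies ν) (hA : IsCompact A) (hA' : Convex ℝ A)
    (hB : IsCompact B) (hB' : Convex ℝ B) (ha : 0 < a) (hb : 0 < b) (hab : a + b = 1) :
    ν.real (Prod.mk x ⁻¹' A) ^ a * ν.real (Prod.mk y ⁻¹' B) ^ b ≤
      ν.real (Prod.mk (a * x + b * y) ⁻¹' (a • A + b • B)) :=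
  (hν (isCompact_preimage_prodMk hA) (convex_preimage_prodMk hA') (isCompact_preimage_prodMk hB)
    (convex_preimage_prodMk hB') ha hb hab).trans <|
    measureReal_mono smul_slice_add_smul_slice_subset
      (isCompact_preimage_prodMk ((hA.smul a).add (hB.smul b))).measure_lt_top.ne

theorem continuousOn_measureReal_slice [IsFiniteMeasureOnCompacts ν]
    (hν : LogConcaveOnConvexBodies ν) (hA : IsCompact A) (hA' : Convex ℝ A)
    {I : Set ℝ} (hI : IsOpen I) (hI' : Convex ℝ I) (hpos : ∀ x ∈ I, 0 < ν.real (Prod.mk x ⁻¹' A)) :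
    ContinuousOn (fun x ↦ ν.real (Prod.mk x ⁻¹' A)) I := by
  have hlog : ConcaveOn ℝ I fun x ↦ Real.log (ν.real (Prod.mk x ⁻¹' A)) := by
    refine concaveOn_iff_forall_pos.2 ⟨hI', fun x hx y hy a b ha hb hab ↦ ?_⟩
    have hxpos := hpos x hx
    have hypos := hpos y hy
    have hle := rpow_mul_rpow_measureReal_slice_le (x := x) (y := y) hν hA hA' hA hA' ha hb hab
    rw [← hA'.add_smul ha.le hb.le, hab, one_smul] at hle
    calc a • Real.log _ + b • Real.log _
        = Real.log (ν.real (Prod.mk x ⁻¹' A) ^ a * ν.real (Prod.mk y ⁻¹' A) ^ b) := by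
          rw [Real.log_mul (by positivity) (by positivity), Real.log_rpow hxpos,
            Real.log_rpow hypos, smul_eq_mul, smul_eq_mul]
      _ ≤ _ := Real.log_le_log (by positivity) hle
  exact (hlog.continuousOn hI).rexp.congr fun x hx ↦ (Real.exp_log (hpos x hx)).symm

/-- The density of the first marginal of the uniform probability measure on `A ⊆ ℝ × F`. -/
noncomputable def sliceDensity (ν : Measure F) (A : Set (ℝ × F)) (x : ℝ) : ℝ :=
  ν.real (Prod.mk x ⁻¹' A) / (volume.prod ν).real A

theorem sliceDensity_rpow_mul_rpow_le [IsFiniteMeasureOnCompacts ν]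
    (hν : LogConcaveOnConvexBodies ν) (hA : IsCompact A) (hA' : Convex ℝ A)
    (hB : IsCompact B) (hB' : Convex ℝ B) (ha : 0 < a) (hb : 0 < b) (hab : a + b = 1) :
    sliceDensity ν A x ^ a * sliceDensity ν B y ^ b ≤
      ν.real (Prod.mk (a * x + b * y) ⁻¹' (a • A + b • B)) /
        ((volume.prod ν).real A ^ a * (volume.prod ν).real B ^ b) := by
  rw [sliceDensity, sliceDensity, Real.div_rpow measureReal_nonneg measureReal_nonneg,
    Real.div_rpow measureReal_nonneg measureReal_nonneg, div_mul_div_comm]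
  gcongr
  exact rpow_mul_rpow_measureReal_slice_le hν hA hA' hB hB' ha hb hab

variable [BorelSpace F] [FiniteDimensional ℝ F] [ν.IsAddHaarMeasure]

theorem integral_measureReal_preimage_prodMk (hA : IsCompact A) :
    ∫ x, ν.real (Prod.mk x ⁻¹' A) = (volume.prod ν).real A := by
  simp only [measureReal_def]
  rw [Measure.prod_apply hA.measurableSet,
    integral_toReal (measurable_measure_prodMk_left hA.measurableSet).aemeasurable
      (.of_forall fun _ ↦ (isCompact_preimage_prodMk hA).measure_lt_top)]

theorem integrable_measureReal_preimage_prodMk (hA : IsCompact A) :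
    Integrable fun x ↦ ν.real (Prod.mk x ⁻¹' A) :=
  Measure.integrable_measure_prodMk_left hA.measurableSet hA.measure_lt_top.ne

theorem exists_isIntervalDensity_sliceDensity (hν : LogConcaveOnConvexBodies ν) (hA : IsCompact A)
    (hA' : Convex ℝ A) (hpos : 0 < (volume.prod ν).real A) :
    ∃ α β, IsIntervalDensity (sliceDensity ν A) α β := by
  have hint : (interior A).Nonempty := nonempty_of_measure_ne_zero (μ := volume.prod ν) <| by
    rw [measure_interior_of_null_frontier (hA'.addHaar_frontier _)]
    exact fun h ↦ hpos.ne' (by simp [measureReal_def, h])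
  obtain ⟨α, β, hαβ⟩ : ∃ α β, Prod.fst '' A = Icc α β := ⟨_, _, eq_Icc_of_connected_compact
    ⟨(hint.mono interior_subset).image _,
      hA'.isPreconnected.image _ continuous_fst.continuousOn⟩ (hA.image continuous_fst)⟩
  have hIoo : Prod.fst '' interior A = Ioo α β := by
    rw [image_fst_interior hA' hint, hαβ, interior_Icc]
  have hslice (x) (hx : x ∈ Ioo α β) : 0 < ν.real (Prod.mk x ⁻¹' A) :=
    measureReal_slice_pos hA (hIoo ▸ hx)
  refine ⟨α, β, nonempty_Ioo.1 (hIoo ▸ hint.image _),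
    (continuousOn_measureReal_slice hν hA hA' isOpen_Ioo (convex_Ioo α β) hslice).div_const _,
    fun x hx ↦ div_pos (hslice x hx) hpos, fun x hx ↦ ?_, ?_⟩
  · have hempty : Prod.mk x ⁻¹' A = ∅ :=
      eq_empty_of_forall_notMem fun z hz ↦ hx (hαβ ▸ mem_image_of_mem Prod.fst hz)
    simp [sliceDensity, hempty]
  · simp only [sliceDensity, integral_div, integral_measureReal_preimage_prodMk hA,
      div_self hpos.ne']

theorem map_fst_cond_prod (hA : IsCompact A) (hpos : 0 < (volume.prod ν).real A) :
    ((volume.prod ν)[|A]).map Prod.fst =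
      volume.withDensity fun x ↦ .ofReal (sliceDensity ν A x) := by
  have hdensity (x) : ENNReal.ofReal (sliceDensity ν A x) =
      ((volume.prod ν) A)⁻¹ * ν (Prod.mk x ⁻¹' A) := by
    rw [sliceDensity, ENNReal.ofReal_div_of_pos hpos,
      ofReal_measureReal (isCompact_preimage_prodMk hA).measure_lt_top.ne,
      ofReal_measureReal hA.measure_lt_top.ne, ENNReal.div_eq_inv_mul]
  ext S hS
  have hfst : A ∩ Prod.fst ⁻¹' S = A ∩ S ×ˢ univ := by rw [prod_univ]
  rw [Measure.map_apply measurable_fst hS, cond_apply hA.measurableSet, withDensity_apply _ hS,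
    funext hdensity, lintegral_const_mul _ (measurable_measure_prodMk_left hA.measurableSet),
    hfst, ← Measure.restrict_apply hA.measurableSet, ← Measure.restrict_prod_eq_prod_univ,
    Measure.prod_apply (μ := volume.restrict S) hA.measurableSet]

theorem map_add_withDensity {f g : ℝ → ℝ≥0∞} {d : ℝ} (hfg : ∀ᵐ x, g (x + d) = f x) :
    (volume.withDensity f).map (· + d) = volume.withDensity g := by
  ext S hS
  have hS' : MeasurableSet ((· + d) ⁻¹' S) := measurable_add_const d hS
  rw [Measure.map_apply (measurable_add_const d) hS, withDensity_apply _ hS',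
    withDensity_apply _ hS, ← (measurePreserving_add_right volume d).setLIntegral_comp_preimage_emb
      (measurableEmbedding_addRight d) g]
  refine setLIntegral_congr_fun_ae hS' ?_
  filter_upwards [hfg] with x hx _ using hx.symm

theorem LogConcaveOnConvexBodies.prod (hν : LogConcaveOnConvexBodies ν) :
    LogConcaveOnConvexBodies ((volume : Measure ℝ).prod ν) := by
  intro A B hA hA' hB hB' a b ha hb hab
  have hAB : IsCompact (a • A + b • B) := (hA.smul a).add (hB.smul b)
  rcases measureReal_nonneg.eq_or_lt' (a := (volume.prod ν).real A) with hA0 | hA0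
  · simp [hA0, Real.zero_rpow ha.ne']
  rcases measureReal_nonneg.eq_or_lt' (a := (volume.prod ν).real B) with hB0 | hB0
  · simp [hB0, Real.zero_rpow hb.ne']
  obtain ⟨_, _, hf⟩ := exists_isIntervalDensity_sliceDensity hν hA hA' hA0
  obtain ⟨_, _, hg⟩ := exists_isIntervalDensity_sliceDensity hν hB hB' hB0
  have hone := hf.one_le_integral_of_rpow_mul_rpow_le hg ha hb hab
    ((integrable_measureReal_preimage_prodMk (ν := ν) hAB).div_const
      ((volume.prod ν).real A ^ a * (volume.prod ν).real B ^ b)) (fun _ ↦ by positivity)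
    fun _ _ _ _ ↦ sliceDensity_rpow_mul_rpow_le hν hA hA' hB hB' ha hb hab
  rwa [integral_div, integral_measureReal_preimage_prodMk hAB, one_le_div (by positivity)] at hone

theorem exists_map_fst_add_cond_prod_eq (hν : LogConcaveOnConvexBodies ν) (hA : IsCompact A)
    (hA' : Convex ℝ A) (hA0 : 0 < (volume.prod ν).real A) (hB : IsCompact B) (hB' : Convex ℝ B)
    (hB0 : 0 < (volume.prod ν).real B) (ha : 0 < a) (hb : 0 < b) (hab : a + b = 1)
    (hle : (volume.prod ν).real (a • A + b • B) ≤
      (volume.prod ν).real A ^ a * (volume.prod ν).real B ^ b) :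
    ∃ d, ((volume.prod ν)[|A]).map (fun p ↦ p.1 + d) = ((volume.prod ν)[|B]).map Prod.fst := by
  have hAB : IsCompact (a • A + b • B) := (hA.smul a).add (hB.smul b)
  obtain ⟨_, _, hf⟩ := exists_isIntervalDensity_sliceDensity hν hA hA' hA0
  obtain ⟨_, _, hg⟩ := exists_isIntervalDensity_sliceDensity hν hB hB' hB0
  obtain ⟨d, hd⟩ := hf.exists_ae_eq_translate_of_integral_le_one hg ha hb hab
    ((integrable_measureReal_preimage_prodMk (ν := ν) hAB).div_const
      ((volume.prod ν).real A ^ a * (volume.prod ν).real B ^ b)) (fun _ ↦ by positivity)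
    (fun _ _ _ _ ↦ sliceDensity_rpow_mul_rpow_le hν hA hA' hB hB' ha hb hab) <| by
      rwa [integral_div, integral_measureReal_preimage_prodMk hAB, div_le_one (by positivity)]
  refine ⟨d, ?_⟩
  rw [map_fst_cond_prod hB hB0, ← map_add_withDensity (d := d) (hd.mono fun x hx ↦ by rw [hx]),
    ← map_fst_cond_prod hA hA0, Measure.map_map (measurable_add_const d) measurable_fst]
  rfl

end Slices

section MeasurableEmbedding

variable {α β : Type*} [MeasurableSpace α] [MeasurableSpace β] {μ : Measure α} {ν : Measure β}
  {f : α → β}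

theorem measureReal_image_of_measurePreserving (hf : MeasurePreserving f μ ν)
    (hf' : MeasurableEmbedding f) (s : Set α) : ν.real (f '' s) = μ.real s := by
  rw [measureReal_def, ← hf.measure_preimage_emb hf', preimage_image_eq _ hf'.injective,
    measureReal_def]

theorem map_cond_of_measurePreserving (hf : MeasurePreserving f μ ν) (hf' : MeasurableEmbedding f)
    (s : Set α) : (μ[|s]).map f = ν[|f '' s] := by
  rw [ProbabilityTheory.cond, ProbabilityTheory.cond, Measure.map_smul,
    (hf.restrict_image_emb hf' s).map_eq, ← hf.measure_preimage_emb hf',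
    preimage_image_eq _ hf'.injective]

end MeasurableEmbedding

section BrunnMinkowski

variable {E : Type*} [NormedAddCommGroup E] [NormedSpace ℝ E] [MeasurableSpace E]

theorem logConcaveOnConvexBodies_of_subsingleton [Subsingleton E] (μ : Measure E) :
    LogConcaveOnConvexBodies μ := by
  intro A B _ _ _ _ a b ha hb hab
  rcases A.eq_empty_or_nonempty with rfl | hA
  · simp [Real.zero_rpow ha.ne']
  rcases B.eq_empty_or_nonempty with rfl | hB
  · simp [Real.zero_rpow hb.ne']
  have hAB : (a • A + b • B).Nonempty := hA.smul_set.add hB.smul_set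
  rw [Subsingleton.eq_univ_of_nonempty hA, Subsingleton.eq_univ_of_nonempty hB] at hAB ⊢
  rw [Subsingleton.eq_univ_of_nonempty hAB, ← Real.rpow_add_of_nonneg measureReal_nonneg ha.le
    hb.le, hab, Real.rpow_one]

variable [BorelSpace E]

theorem LogConcaveOnConvexBodies.of_measurePreserving {G : Type*} [NormedAddCommGroup G]
    [NormedSpace ℝ G] [MeasurableSpace G] [BorelSpace G] {μ : Measure E} {ν : Measure G}
    (hν : LogConcaveOnConvexBodies ν) (e : E ≃L[ℝ] G) (he : MeasurePreserving e μ ν) :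
    LogConcaveOnConvexBodies μ := by
  intro A B hA hA' hB hB' a b ha hb hab
  have hemb : MeasurableEmbedding e := e.toHomeomorph.measurableEmbedding
  simp only [← measureReal_image_of_measurePreserving he hemb, image_add, image_smul_set]
  exact hν (hA.image e.continuous) (hA'.linear_image e.toLinearMap) (hB.image e.continuous)
    (hB'.linear_image e.toLinearMap) ha hb hab

variable [FiniteDimensional ℝ E]

theorem exists_measurePreserving_prod_ker (μ : Measure E) [μ.IsAddHaarMeasure] {l : E →L[ℝ] ℝ}
    {u : E} (hu : l u = 1) :
    ∃ (e : E ≃L[ℝ] ℝ × l.ker) (ν : Measure l.ker), ν.IsAddHaarMeasure ∧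
      MeasurePreserving e μ (volume.prod ν) ∧ ∀ x, (e x).1 = l x := by
  have hright : Function.RightInverse (ContinuousLinearMap.toSpanSingleton ℝ u) l :=
    fun r ↦ by simp [hu]
  let e : E ≃L[ℝ] ℝ × l.ker := .equivOfRightInverse l _ hright
  let ν₀ : Measure l.ker := Measure.addHaar
  have hμ : (μ.map e).IsAddHaarMeasure := e.isAddHaarMeasure_map μ
  let c := (μ.map e).addHaarScalarFactor (volume.prod ν₀)
  have hc : 0 < c := Measure.addHaarScalarFactor_pos_of_isAddHaarMeasure _ _
  refine ⟨e, c • ν₀, .nnreal_smul _ hc.ne', ⟨e.continuous.measurable, ?_⟩,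
    ContinuousLinearEquiv.fst_equivOfRightInverse l _ hright⟩
  rw [Measure.prod_smul_right]
  exact Measure.isAddLeftInvariant_eq_smul _ _

theorem logConcaveOnConvexBodies_addHaar (μ : Measure E) [μ.IsAddHaarMeasure] :
    LogConcaveOnConvexBodies μ := by
  induction hn : finrank ℝ E generalizing E with
  | zero =>
    have := finrank_zero_iff.1 hn
    exact logConcaveOnConvexBodies_of_subsingleton μ
  | succ n ih =>
    have : Nontrivial E := nontrivial_of_finrank_pos (R := ℝ) (hn ▸ n.succ_pos)
    obtain ⟨u, hu⟩ := exists_ne (0 : E)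
    obtain ⟨l, hl⟩ := SeparatingDual.exists_eq_one (R := ℝ) hu
    obtain ⟨e, ν, hν, he, -⟩ := exists_measurePreserving_prod_ker μ hl
    have hker : finrank ℝ l.ker = n := by
      have := e.toLinearEquiv.finrank_eq
      rw [finrank_prod, finrank_self, hn] at this
      omega
    exact (ih ν hker).prod.of_measurePreserving e he

end BrunnMinkowski

section EqualityCase

theorem cond_compl_self_eq_zero {Ω : Type*} [MeasurableSpace Ω] (μ : Measure Ω) {A : Set Ω}
    (hA : MeasurableSet A) : μ[|A] Aᶜ = 0 :=
  ae_cond_mem hA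

theorem integrable_id_cond {X : Type*} [NormedAddCommGroup X] [MeasurableSpace X] [BorelSpace X]
    {μ : Measure X} [IsFiniteMeasureOnCompacts μ] {A : Set X} (hA : IsCompact A) (hμA : μ A ≠ 0) :
    Integrable (fun x ↦ x) μ[|A] :=
  (continuousOn_id.integrableOn_compact hA).smul_measure (ENNReal.inv_ne_top.2 hμA)

variable {E : Type*} [NormedAddCommGroup E] [NormedSpace ℝ E] [MeasurableSpace E] [BorelSpace E]
  [FiniteDimensional ℝ E]

-- Cramér–Wold; the shift along `l` has to be `l` of the difference of the barycentres.
theorem exists_map_add_const_eq_of_forall_dual {P Q : Measure E} [IsProbabilityMeasure P]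
    [IsProbabilityMeasure Q] (hP : Integrable (fun x ↦ x) P) (hQ : Integrable (fun x ↦ x) Q)
    (h : ∀ l : E →L[ℝ] ℝ, ∃ d, P.map (fun x ↦ l x + d) = Q.map l) :
    ∃ c, P.map (· + c) = Q := by
  refine ⟨∫ x, x ∂Q - ∫ x, x ∂P, ?_⟩
  have : IsProbabilityMeasure (P.map (· + (∫ x, x ∂Q - ∫ x, x ∂P))) :=
    Measure.isProbabilityMeasure_map (by fun_prop)
  refine Measure.ext_of_charFunDual (funext fun l ↦ ?_)
  obtain ⟨d, hd⟩ := h l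
  have hmean : l (∫ x, x ∂P) + d = l (∫ x, x ∂Q) := by
    calc l (∫ x, x ∂P) + d = ∫ x, l x + d ∂P := by
          rw [integral_add (l.integrable_comp hP) (integrable_const d), integral_const,
            probReal_univ, one_smul, l.integral_comp_comm hP]
      _ = ∫ t, t ∂P.map (fun x ↦ l x + d) := by rw [integral_map (by fun_prop) (by fun_prop)]
      _ = ∫ t, t ∂Q.map l := by rw [hd]
      _ = ∫ x, l x ∂Q := integral_map (by fun_prop) (by fun_prop)
      _ = l (∫ x, x ∂Q) := l.integral_comp_comm hQ
  have hshift : l ∘ (· + (∫ x, x ∂Q - ∫ x, x ∂P)) = fun x ↦ l x + d := by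
    ext x
    simp [← hmean]
  rw [charFunDual_eq_charFun_map_one, charFunDual_eq_charFun_map_one, ← hd,
    Measure.map_map (by fun_prop) (by fun_prop), hshift]

variable {μ : Measure E} [μ.IsAddHaarMeasure] {A B S : Set E} {a b : ℝ}

theorem subset_of_cond_compl_eq_zero (hA : MeasurableSet A) (hA' : Convex ℝ A) (hμA : μ A ≠ 0)
    (hμA' : μ A ≠ ∞) (hS : IsClosed S) (h : μ[|A] Sᶜ = 0) : A ⊆ S := by
  have hnull : μ (A \ S) = 0 := by
    rw [cond_apply hA, ← sdiff_eq] at h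
    simpa [hμA'] using h
  have hint : (interior A).Nonempty := nonempty_of_measure_ne_zero (μ := μ) <| by
    rwa [measure_interior_of_null_frontier (hA'.addHaar_frontier μ)]
  have hempty : interior A \ S = ∅ := (isOpen_interior.sdiff hS).eq_empty_of_measure_zero <|
    measure_mono_null (sdiff_subset_sdiff_left interior_subset) hnull
  calc A ⊆ closure (interior A) := by
        rw [hA'.closure_interior_eq_closure_of_nonempty_interior hint]
        exact subset_closure
    _ ⊆ S := closure_minimal (sdiff_eq_empty.1 hempty) hS

theorem eq_vadd_of_map_cond_eq (hA : IsCompact A) (hA' : Convex ℝ A) (hμA : μ A ≠ 0)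
    (hB : IsCompact B) (hB' : Convex ℝ B) (hμB : μ B ≠ 0) {c : E}
    (h : (μ[|A]).map (· + c) = μ[|B]) : B = c +ᵥ A := by
  have happly (S : Set E) (hS : MeasurableSet S) : μ[|B] S = μ[|A] ((· + c) ⁻¹' S) := by
    rw [← h, Measure.map_apply (measurable_add_const c) hS]
  have hAc : IsCompact (c +ᵥ A) := hA.vadd c
  refine subset_antisymm ?_ ?_
  · refine subset_of_cond_compl_eq_zero hB.measurableSet hB' hμB hB.measure_lt_top.ne
      hAc.isClosed ?_
    rw [happly _ hAc.measurableSet.compl, preimage_compl]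
    convert cond_compl_self_eq_zero μ hA.measurableSet using 3
    ext x
    simp [mem_vadd_set, add_comm c]
  · have hsub : A ⊆ (· + c) ⁻¹' B := by
      refine subset_of_cond_compl_eq_zero hA.measurableSet hA' hμA hA.measure_lt_top.ne
        (hB.isClosed.preimage (continuous_add_const c)) ?_
      rw [← preimage_compl, ← happly _ hB.measurableSet.compl]
      exact cond_compl_self_eq_zero μ hB.measurableSet
    rintro _ ⟨x, hx, rfl⟩
    simpa [add_comm c] using hsub hx

theorem exists_map_cond_add_eq (hA : IsCompact A) (hA' : Convex ℝ A) (hμA : 0 < μ.real A)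
    (hB : IsCompact B) (hB' : Convex ℝ B) (hμB : 0 < μ.real B) (ha : 0 < a) (hb : 0 < b)
    (hab : a + b = 1) (hle : μ.real (a • A + b • B) ≤ μ.real A ^ a * μ.real B ^ b)
    {l : E →L[ℝ] ℝ} (hl : l ≠ 0) : ∃ d, (μ[|A]).map (fun x ↦ l x + d) = (μ[|B]).map l := by
  obtain ⟨u, hu⟩ := l.toLinearMap.surjective (fun h ↦ hl (ContinuousLinearMap.coe_injective h)) 1
  obtain ⟨e, ν, hν, he, hfst⟩ := exists_measurePreserving_prod_ker μ hu
  have hemb : MeasurableEmbedding e := e.toHomeomorph.measurableEmbedding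
  simp only [← measureReal_image_of_measurePreserving he hemb, image_add, image_smul_set]
    at hμA hμB hle
  obtain ⟨d, hd⟩ := exists_map_fst_add_cond_prod_eq (logConcaveOnConvexBodies_addHaar ν)
    (hA.image e.continuous) (hA'.linear_image e.toLinearMap) hμA (hB.image e.continuous)
    (hB'.linear_image e.toLinearMap) hμB ha hb hab hle
  refine ⟨d, ?_⟩
  rw [← map_cond_of_measurePreserving he hemb, ← map_cond_of_measurePreserving he hemb,
    Measure.map_map (by fun_prop) hemb.measurable, Measure.map_map (by fun_prop) hemb.measurable]
    at hd
  simpa only [Function.comp_def, hfst] using hd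

theorem exists_eq_vadd_of_measureReal_le (hA : IsCompact A) (hA' : Convex ℝ A) (hμA : 0 < μ.real A)
    (hB : IsCompact B) (hB' : Convex ℝ B) (hμB : 0 < μ.real B) (ha : 0 < a) (hb : 0 < b)
    (hab : a + b = 1) (hle : μ.real (a • A + b • B) ≤ μ.real A ^ a * μ.real B ^ b) :
    ∃ c : E, B = c +ᵥ A := by
  have hμA' : μ A ≠ 0 := fun h ↦ hμA.ne' (by rw [measureReal_def, h, ENNReal.toReal_zero])
  have hμB' : μ B ≠ 0 := fun h ↦ hμB.ne' (by rw [measureReal_def, h, ENNReal.toReal_zero])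
  have := cond_isProbabilityMeasure_of_finite hμA' hA.measure_lt_top.ne
  have := cond_isProbabilityMeasure_of_finite hμB' hB.measure_lt_top.ne
  have hmarginal (l : E →L[ℝ] ℝ) : ∃ d, (μ[|A]).map (fun x ↦ l x + d) = (μ[|B]).map l := by
    rcases eq_or_ne l 0 with rfl | hl
    · exact ⟨0, by simp [Measure.map_const, Pi.zero_def]⟩
    · exact exists_map_cond_add_eq hA hA' hμA hB hB' hμB ha hb hab hle hl
  obtain ⟨c, hc⟩ := exists_map_add_const_eq_of_forall_dual (integrable_id_cond hA hμA')
    (integrable_id_cond hB hμB') hmarginal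
  exact ⟨c, eq_vadd_of_map_cond_eq hA hA' hμA' hB hB' hμB' hc⟩

end EqualityCase

section CentralSymmetry

/-- `K` is symmetric under the point reflection in some centre `c`. -/
def IsCentrallySymmetric {E : Type*} [AddCommGroup E] [Module ℝ E] (K : Set E) : Prop :=
  ∃ c, ∀ x, x ∈ K ↔ (2 : ℝ) • c - x ∈ K

theorem isCentrallySymmetric_of_neg_eq_vadd {E : Type*} [AddCommGroup E] [Module ℝ E] {K : Set E}
    {c : E} (h : -K = c +ᵥ K) : IsCentrallySymmetric K := by
  refine ⟨-((1 / 2 : ℝ) • c), fun x ↦ ?_⟩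
  rw [← neg_mem_neg (s := K), h, mem_vadd_set_iff_neg_vadd_mem]
  convert Iff.rfl using 2
  rw [smul_neg, smul_smul, vadd_eq_add]
  norm_num [sub_eq_add_neg]

variable {E : Type*} [NormedAddCommGroup E] [NormedSpace ℝ E] [MeasurableSpace E] [BorelSpace E]
  [FiniteDimensional ℝ E] {μ : Measure E} [μ.IsAddHaarMeasure] {K : Set E} {a b t : ℝ}

theorem measureReal_rpow_mul_measureReal_neg_rpow (ha : 0 ≤ a) (hb : 0 ≤ b) (hab : a + b = 1) :
    μ.real K ^ a * μ.real (-K) ^ b = μ.real K := by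
  have hneg : μ.real (-K) = μ.real K := by
    rw [measureReal_def, Measure.measure_neg, measureReal_def]
  rw [hneg, ← Real.rpow_add_of_nonneg measureReal_nonneg ha hb, hab, Real.rpow_one]

theorem measureReal_smul_set_of_nonneg (ht : 0 ≤ t) (S : Set E) :
    μ.real (t • S) = t ^ finrank ℝ E * μ.real S := by
  rw [measureReal_def, Measure.addHaar_smul_of_nonneg μ ht, ENNReal.toReal_mul,
    ENNReal.toReal_ofReal (by positivity), measureReal_def]

theorem measureReal_sub_smul (ht : 0 ≤ t) :
    μ.real (K - t • K) =
      (1 + t) ^ finrank ℝ E * μ.real ((1 / (1 + t)) • K + (t / (1 + t)) • -K) := by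
  have hpos : 1 + t ≠ 0 := by positivity
  rw [← measureReal_smul_set_of_nonneg (by positivity), smul_add, smul_smul, smul_smul,
    mul_one_div_cancel hpos, mul_div_cancel₀ _ hpos, one_smul, smul_set_neg, sub_eq_add_neg]

theorem one_add_pow_mul_measureReal_le (hK : IsCompact K) (hK' : Convex ℝ K) (ht : 0 < t) :
    (1 + t) ^ finrank ℝ E * μ.real K ≤ μ.real (K - t • K) := by
  have hab : 1 / (1 + t) + t / (1 + t) = 1 := by field_simp
  have h := logConcaveOnConvexBodies_addHaar μ hK hK' hK.neg hK'.neg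
    (by positivity) (by positivity) hab
  rw [measureReal_rpow_mul_measureReal_neg_rpow (by positivity) (by positivity) hab] at h
  rw [measureReal_sub_smul ht.le]
  gcongr

theorem isCentrallySymmetric_of_measureReal_le (hK : IsCompact K) (hK' : Convex ℝ K)
    (hμK : 0 < μ.real K) (ht : 0 < t)
    (hle : μ.real (K - t • K) ≤ (1 + t) ^ finrank ℝ E * μ.real K) : IsCentrallySymmetric K := by
  have hab : 1 / (1 + t) + t / (1 + t) = 1 := by field_simp
  have hneg : 0 < μ.real (-K) := by rwa [measureReal_def, Measure.measure_neg]
  rw [measureReal_sub_smul ht.le] at hle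
  obtain ⟨c, hc⟩ := exists_eq_vadd_of_measureReal_le hK hK' hμK hK.neg hK'.neg hneg
    (by positivity) (by positivity) hab <| by
      rw [measureReal_rpow_mul_measureReal_neg_rpow (by positivity) (by positivity) hab]
      exact le_of_mul_le_mul_left hle (by positivity)
  exact isCentrallySymmetric_of_neg_eq_vadd hc

end CentralSymmetry

section Cone

theorem isCompact_sub {G : Type*} [AddGroup G] [TopologicalSpace G] [IsTopologicalAddGroup G]
    {A B : Set G} (hA : IsCompact A) (hB : IsCompact B) : IsCompact (A - B) :=
  sub_eq_add_neg A B ▸ hA.add hB.neg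

theorem convexHull_insert_zero {V : Type*} [AddCommGroup V] [Module ℝ V] {S : Set V}
    (hS : Convex ℝ S) (hne : S.Nonempty) : convexHull ℝ (insert 0 S) = Icc (0 : ℝ) 1 • S := by
  rw [convexHull_insert hne, hS.convexHull_eq, convexJoin_singleton_left]
  ext x
  simp only [mem_iUnion, segment_eq_image, smul_zero, zero_add, mem_image, mem_smul]
  grind

theorem singleton_prod_preimage_prodMk {X Y : Type*} {T : Set (X × Y)} {x : X}
    (hT : ∀ p ∈ T, p.1 = x) : {x} ×ˢ (Prod.mk x ⁻¹' T) = T := by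
  ext ⟨x', y⟩
  simp only [mem_prod, mem_singleton_iff, mem_preimage]
  exact ⟨fun ⟨hx, hy⟩ ↦ hx ▸ hy, fun hp ↦ ⟨hT _ hp, hT _ hp ▸ hp⟩⟩

variable {F : Type*} [NormedAddCommGroup F] [NormedSpace ℝ F] {K : Set F} {s : ℝ}

/-- The cone in `ℝ × F` with apex `0` and base `{1} × K`, for convex `K`. -/
def coneOver (K : Set F) : Set (ℝ × F) :=
  Icc (0 : ℝ) 1 • (({1} : Set ℝ) ×ˢ K)

theorem mk_mem_coneOver {z : F} : (s, z) ∈ coneOver K ↔ s ∈ Icc 0 1 ∧ z ∈ s • K := by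
  simp only [coneOver, mem_smul, mem_smul_set, Prod.exists, mem_prod, mem_singleton_iff,
    Prod.smul_mk, Prod.mk.injEq, smul_eq_mul]
  aesop

theorem preimage_prodMk_coneOver (hs : s ∈ Icc (0 : ℝ) 1) :
    Prod.mk s ⁻¹' coneOver K = s • K := by
  ext z
  simp only [mem_preimage, mk_mem_coneOver, hs, true_and]

theorem isCompact_coneOver (hK : IsCompact K) : IsCompact (coneOver K) :=
  isCompact_Icc.smul_set (isCompact_singleton.prod hK)

theorem sub_smul_subset_preimage_prodMk (hs : s ∈ Icc (0 : ℝ) 1) :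
    K - (1 - s) • K ⊆ Prod.mk s ⁻¹' (coneOver K - coneOver K) := by
  rintro _ ⟨x, hx, y, hy, rfl⟩
  exact ⟨(1, x), mk_mem_coneOver.2 ⟨by simp, by simpa using hx⟩, (1 - s, y),
    mk_mem_coneOver.2 ⟨by simpa [and_comm] using hs, hy⟩, by simp⟩

theorem convexHull_insert_zero_eq_coneOver {T : Set (ℝ × F)} (hT : Convex ℝ T) (hne : T.Nonempty)
    (hone : ∀ p ∈ T, p.1 = 1) : convexHull ℝ (insert 0 T) = coneOver (Prod.mk 1 ⁻¹' T) := by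
  rw [convexHull_insert_zero hT hne, coneOver, singleton_prod_preimage_prodMk hone]

variable [MeasurableSpace F] {ν : Measure F}

theorem measureReal_sub_smul_le_slice [IsFiniteMeasureOnCompacts ν] (hK : IsCompact K)
    (hs : s ∈ Icc (0 : ℝ) 1) :
    ν.real (K - (1 - s) • K) ≤ ν.real (Prod.mk s ⁻¹' (coneOver K - coneOver K)) :=
  measureReal_mono (sub_smul_subset_preimage_prodMk hs) (isCompact_preimage_prodMk
    (isCompact_sub (isCompact_coneOver hK) (isCompact_coneOver hK))).measure_lt_top.ne

variable [BorelSpace F] [FiniteDimensional ℝ F] [ν.IsAddHaarMeasure]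

theorem measureReal_coneOver (hK : IsCompact K) :
    (volume.prod ν).real (coneOver K) = ν.real K / (finrank ℝ F + 1) := by
  have hsupp (s) (hs : s ∉ Icc (0 : ℝ) 1) : ν.real (Prod.mk s ⁻¹' coneOver K) = 0 := by
    have hempty : Prod.mk s ⁻¹' coneOver K = ∅ :=
      eq_empty_of_forall_notMem fun z hz ↦ hs (mk_mem_coneOver.1 hz).1
    rw [hempty, measureReal_empty]
  calc (volume.prod ν).real (coneOver K)
      = ∫ s in Icc (0 : ℝ) 1, ν.real (Prod.mk s ⁻¹' coneOver K) := by
        rw [← integral_measureReal_preimage_prodMk (isCompact_coneOver hK),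
          setIntegral_eq_integral_of_forall_compl_eq_zero hsupp]
    _ = ∫ s in Icc (0 : ℝ) 1, s ^ finrank ℝ F * ν.real K :=
        setIntegral_congr_fun measurableSet_Icc fun s hs ↦ by
          simp only [preimage_prodMk_coneOver hs, measureReal_smul_set_of_nonneg hs.1]
    _ = ν.real K / (finrank ℝ F + 1) := by
        rw [integral_Icc_eq_integral_Ioc, ← intervalIntegral.integral_of_le zero_le_one,
          intervalIntegral.integral_mul_const, integral_pow]
        simp [div_eq_inv_mul]

theorem two_mul_integral_measureReal_preimage_prodMk_le {D : Set (ℝ × F)} (hD : IsCompact D)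
    (hneg : -D = D) :
    2 * ∫ s in (0 : ℝ)..1, ν.real (Prod.mk s ⁻¹' D) ≤ (volume.prod ν).real D := by
  have heven (s : ℝ) : ν.real (Prod.mk (-s) ⁻¹' D) = ν.real (Prod.mk s ⁻¹' D) := by
    have hslice : Prod.mk (-s) ⁻¹' D = -(Prod.mk s ⁻¹' D) := by
      ext z
      nth_rw 1 [← hneg]
      simp
    rw [hslice, measureReal_def, Measure.measure_neg, measureReal_def]
  have habs (s : ℝ) : ν.real (Prod.mk |s| ⁻¹' D) = ν.real (Prod.mk s ⁻¹' D) := by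
    rcases abs_choice s with h | h <;> rw [h]
    exact heven s
  calc 2 * ∫ s in (0 : ℝ)..1, ν.real (Prod.mk s ⁻¹' D)
      ≤ 2 * ∫ s in Ioi (0 : ℝ), ν.real (Prod.mk s ⁻¹' D) := by
        rw [intervalIntegral.integral_of_le zero_le_one]
        gcongr
        · exact .of_forall fun _ ↦ measureReal_nonneg
        · exact (integrable_measureReal_preimage_prodMk hD).integrableOn
        · exact Ioc_subset_Ioi_self
    _ = ∫ s, ν.real (Prod.mk s ⁻¹' D) := by
        rw [← integral_comp_abs (f := fun s ↦ ν.real (Prod.mk s ⁻¹' D))]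
        simp only [habs]
    _ = (volume.prod ν).real D := integral_measureReal_preimage_prodMk hD

theorem two_sub_pow_mul_measureReal_le_slice (hK : IsCompact K) (hK' : Convex ℝ K)
    (hs : s ∈ Ioo (0 : ℝ) 1) :
    (2 - s) ^ finrank ℝ F * ν.real K ≤ ν.real (Prod.mk s ⁻¹' (coneOver K - coneOver K)) := by
  rw [show 2 - s = 1 + (1 - s) by ring]
  exact (one_add_pow_mul_measureReal_le hK hK' (sub_pos.2 hs.2)).trans
    (measureReal_sub_smul_le_slice hK (Ioo_subset_Icc_self hs))

theorem two_sub_pow_mul_measureReal_lt_slice (hK : IsCompact K) (hK' : Convex ℝ K)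
    (hνK : 0 < ν.real K) (hsymm : ¬IsCentrallySymmetric K) (hs : s ∈ Ioo (0 : ℝ) 1) :
    (2 - s) ^ finrank ℝ F * ν.real K < ν.real (Prod.mk s ⁻¹' (coneOver K - coneOver K)) := by
  rw [show 2 - s = 1 + (1 - s) by ring]
  exact lt_of_not_ge fun hle ↦ hsymm <| isCentrallySymmetric_of_measureReal_le hK hK' hνK
    (sub_pos.2 hs.2) ((measureReal_sub_smul_le_slice hK (Ioo_subset_Icc_self hs)).trans hle)

theorem integral_two_sub_pow (n : ℕ) :
    ∫ s in (0 : ℝ)..1, (2 - s) ^ n = (2 ^ (n + 1) - 1) / (n + 1) := by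
  rw [intervalIntegral.integral_comp_sub_left (fun x ↦ x ^ n), integral_pow]
  norm_num

theorem mul_measureReal_coneOver_eq (hK : IsCompact K) :
    (2 ^ (finrank ℝ F + 2) - 2) * (volume.prod ν).real (coneOver K) =
      2 * ∫ s in (0 : ℝ)..1, (2 - s) ^ finrank ℝ F * ν.real K := by
  rw [intervalIntegral.integral_mul_const, integral_two_sub_pow, measureReal_coneOver hK]
  ring

theorem mul_measureReal_coneOver_le (hK : IsCompact K) (hK' : Convex ℝ K) :
    (2 ^ (finrank ℝ F + 2) - 2) * (volume.prod ν).real (coneOver K) ≤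
      (volume.prod ν).real (coneOver K - coneOver K) := by
  have hD := isCompact_sub (isCompact_coneOver hK) (isCompact_coneOver hK)
  refine le_trans ?_ (two_mul_integral_measureReal_preimage_prodMk_le hD (neg_sub _ _))
  rw [mul_measureReal_coneOver_eq hK]
  gcongr
  exact intervalIntegral.integral_mono_on_of_le_Ioo zero_le_one
    (Continuous.intervalIntegrable (by fun_prop) _ _)
    (integrable_measureReal_preimage_prodMk hD).intervalIntegrable
    fun s hs ↦ two_sub_pow_mul_measureReal_le_slice hK hK' hs

theorem mul_measureReal_coneOver_lt (hK : IsCompact K) (hK' : Convex ℝ K) (hνK : 0 < ν.real K)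
    (hsymm : ¬IsCentrallySymmetric K) :
    (2 ^ (finrank ℝ F + 2) - 2) * (volume.prod ν).real (coneOver K) <
      (volume.prod ν).real (coneOver K - coneOver K) := by
  have hD := isCompact_sub (isCompact_coneOver hK) (isCompact_coneOver hK)
  refine lt_of_lt_of_le ?_ (two_mul_integral_measureReal_preimage_prodMk_le hD (neg_sub _ _))
  rw [mul_measureReal_coneOver_eq hK]
  gcongr
  have hpow : IntervalIntegrable (fun s ↦ (2 - s) ^ finrank ℝ F * ν.real K) volume 0 1 :=
    Continuous.intervalIntegrable (by fun_prop) _ _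
  have hslice := (integrable_measureReal_preimage_prodMk (ν := ν) hD).intervalIntegrable
    (a := 0) (b := 1)
  rw [← sub_pos, ← intervalIntegral.integral_sub hslice hpow]
  exact intervalIntegral.intervalIntegral_pos_of_pos_on (hslice.sub hpow)
    (fun s hs ↦ sub_pos.2 (two_sub_pow_mul_measureReal_lt_slice hK hK' hνK hsymm hs)) one_pos

end Cone

section Transfer

theorem exists_dual_eq_one_of_zero_notMem_affineSpan {V : Type*} [NormedAddCommGroup V]
    [NormedSpace ℝ V] [FiniteDimensional ℝ V] {K : Set V} (hK : K.Nonempty)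
    (h0 : (0 : V) ∉ affineSpan ℝ K) : ∃ l : V →L[ℝ] ℝ, ∀ x ∈ K, l x = 1 := by
  obtain ⟨k, hk⟩ := hK
  have hk' := subset_affineSpan ℝ K hk
  have hdir : k ∉ (affineSpan ℝ K).direction := fun h ↦ h0 <| by
    rw [← AffineSubspace.vsub_right_mem_direction_iff_mem hk']
    simpa using neg_mem h
  obtain ⟨f, hfk, hf⟩ := Submodule.exists_le_ker_of_notMem hdir
  refine ⟨((f k)⁻¹ • f).toContinuousLinearMap, fun x hx ↦ ?_⟩
  have hfx : f (x - k) = 0 :=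
    hf (AffineSubspace.vsub_mem_direction (subset_affineSpan ℝ K hx) hk')
  rw [map_sub, sub_eq_zero] at hfx
  simp [hfx, hfk]

theorem interior_convexHull_nonempty_of_finrank {V : Type*} [NormedAddCommGroup V]
    [NormedSpace ℝ V] [FiniteDimensional ℝ V] {K : Set V} {v : V} (hK : K.Nonempty)
    (hv : v ∉ affineSpan ℝ K) (hdim : finrank ℝ V = finrank ℝ (vectorSpan ℝ K) + 1) :
    (interior (convexHull ℝ (K ∪ {v}))).Nonempty := by
  have hlt : affineSpan ℝ K < affineSpan ℝ (K ∪ {v}) :=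
    SetLike.lt_iff_le_and_exists.2 ⟨affineSpan_mono ℝ subset_union_left, v,
      subset_affineSpan ℝ _ (by simp), hv⟩
  have hlt' := Submodule.finrank_lt_finrank_of_lt
    (AffineSubspace.direction_lt_of_nonempty hlt (hK.affineSpan ℝ))
  rw [direction_affineSpan, direction_affineSpan] at hlt'
  rw [interior_convexHull_nonempty_iff_affineSpan_eq_top,
    AffineSubspace.affineSpan_eq_top_iff_vectorSpan_eq_top_of_nonempty _ _ _
      (hK.mono subset_union_left)]
  exact Submodule.eq_top_of_finrank_eq (le_antisymm (Submodule.finrank_le _) (by omega))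

theorem isCentrallySymmetric_of_singleton_prod {F : Type*} [AddCommGroup F] [Module ℝ F]
    {K : Set F} {r : ℝ} (hK : IsCentrallySymmetric K) :
    IsCentrallySymmetric (({r} : Set ℝ) ×ˢ K) := by
  obtain ⟨c, hc⟩ := hK
  refine ⟨(r, c), fun x ↦ ?_⟩
  have hfst : 2 * r - x.1 = r ↔ x.1 = r := by constructor <;> intro h <;> linarith
  simp [hfst, ← hc]

theorem IsCentrallySymmetric.of_image {V W : Type*} [AddCommGroup V] [Module ℝ V]
    [AddCommGroup W] [Module ℝ W] (e : V ≃ₗ[ℝ] W) {K : Set V} (hK : IsCentrallySymmetric (e '' K)) :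
    IsCentrallySymmetric K := by
  obtain ⟨c, hc⟩ := hK
  refine ⟨e.symm c, fun x ↦ ?_⟩
  rw [← e.injective.mem_set_image, hc, ← e.injective.mem_set_image (s := K)]
  simp

theorem IsCentrallySymmetric.of_vadd {V : Type*} [AddCommGroup V] [Module ℝ V] {K : Set V}
    {v : V} (hK : IsCentrallySymmetric (v +ᵥ K)) : IsCentrallySymmetric K := by
  obtain ⟨c, hc⟩ := hK
  refine ⟨c - v, fun x ↦ ?_⟩
  rw [← vadd_mem_vadd_set_iff (a := v), hc, ← vadd_mem_vadd_set_iff (a := v) (s := K)]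
  convert Iff.rfl using 2
  simp only [vadd_eq_add, smul_sub, two_smul]
  abel

variable {E : Type*} [NormedAddCommGroup E] [NormedSpace ℝ E] [MeasurableSpace E] [BorelSpace E]
  [FiniteDimensional ℝ E] {μ : Measure E} [μ.IsAddHaarMeasure] {K C : Set E} {v : E}

theorem mul_measureReal_convexHull_insert_zero_le (hK : IsCompact K) (hK' : Convex ℝ K)
    (hne : K.Nonempty) (h0 : 0 ∉ affineSpan ℝ K) (hC : convexHull ℝ (insert 0 K) = C) :
    (2 ^ (finrank ℝ E + 1) - 2) * μ.real C ≤ μ.real (C - C) ∧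
      (0 < μ.real C → ¬IsCentrallySymmetric K →
        (2 ^ (finrank ℝ E + 1) - 2) * μ.real C < μ.real (C - C)) := by
  obtain ⟨l, hl⟩ := exists_dual_eq_one_of_zero_notMem_affineSpan hne h0
  obtain ⟨u, hu⟩ := hne
  obtain ⟨e, ν, hν, he, hfst⟩ := exists_measurePreserving_prod_ker μ (hl u hu)
  have hemb : MeasurableEmbedding e := e.toHomeomorph.measurableEmbedding
  have hdim : finrank ℝ E = finrank ℝ l.ker + 1 := by
    rw [e.toLinearEquiv.finrank_eq, finrank_prod, finrank_self, add_comm]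
  have hone : ∀ p ∈ e '' K, p.1 = 1 := forall_mem_image.2 fun x hx ↦ (hfst x).trans (hl x hx)
  have hconv : Convex ℝ (e '' K) := hK'.linear_image e.toLinearMap
  have hbase : IsCompact (Prod.mk 1 ⁻¹' (e '' K)) :=
    isCompact_preimage_prodMk (hK.image e.continuous)
  have himage : e '' C = coneOver (Prod.mk 1 ⁻¹' (e '' K)) := by
    rw [← convexHull_insert_zero_eq_coneOver hconv ⟨_, mem_image_of_mem e hu⟩ hone, ← hC]
    simpa [image_insert_eq] using e.toLinearMap.image_convexHull (insert 0 K)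
  simp only [← measureReal_image_of_measurePreserving he hemb, image_sub, himage, hdim]
  refine ⟨mul_measureReal_coneOver_le hbase (convex_preimage_prodMk hconv), fun hpos hsymm ↦ ?_⟩
  rw [measureReal_coneOver hbase, div_pos_iff_of_pos_right (by positivity)] at hpos
  refine mul_measureReal_coneOver_lt hbase (convex_preimage_prodMk hconv) hpos fun h ↦ hsymm ?_
  exact .of_image e.toLinearEquiv
    (singleton_prod_preimage_prodMk hone ▸ isCentrallySymmetric_of_singleton_prod h)

theorem mul_measureReal_convexHull_union_singleton_le (hK : IsCompact K) (hK' : Convex ℝ K)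
    (hne : K.Nonempty) (hv : v ∉ affineSpan ℝ K) (hC : convexHull ℝ (K ∪ {v}) = C) :
    (2 ^ (finrank ℝ E + 1) - 2) * μ.real C ≤ μ.real (C - C) ∧
      (0 < μ.real C → ¬IsCentrallySymmetric K →
        (2 ^ (finrank ℝ E + 1) - 2) * μ.real C < μ.real (C - C)) := by
  have hapex : convexHull ℝ (insert 0 (-v +ᵥ K)) = -v +ᵥ C := by
    rw [← hC, ← convexHull_vadd, vadd_set_union, vadd_set_singleton, vadd_eq_add,
      neg_add_cancel, union_singleton]
  have h0 : 0 ∉ affineSpan ℝ (-v +ᵥ K) := by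
    rw [← AffineSubspace.pointwise_vadd_span, ← neg_add_cancel v, ← vadd_eq_add]
    rwa [AffineSubspace.vadd_mem_pointwise_vadd_iff]
  have hvol : μ.real (-v +ᵥ C) = μ.real C := by
    rw [measureReal_def, measure_vadd, measureReal_def]
  have hsub : (-v +ᵥ C) - (-v +ᵥ C) = C - C := by
    simp only [← singleton_vadd, vadd_eq_add, add_sub_add_comm]
    simp
  have h := mul_measureReal_convexHull_insert_zero_le (μ := μ) (hK.vadd (-v)) (hK'.vadd (-v))
    hne.vadd_set h0 hapex
  rw [hvol, hsub] at h
  exact ⟨h.1, fun hpos hsymm ↦ h.2 hpos fun h' ↦ hsymm h'.of_vadd⟩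

theorem cone_volume_ratio_le_four_sevenths_general {n : ℕ} (hE : finrank ℝ E = n + 1)
    (hK : IsCompact K) (hK' : Convex ℝ K) (hne : K.Nonempty)
    (hn : finrank ℝ (vectorSpan ℝ K) = n) (hv : v ∉ affineSpan ℝ K)
    (hC : convexHull ℝ (K ∪ {v}) = C) :
    μ.real C / μ.real ((2⁻¹ : ℝ) • (C - C)) ≤ 2 ^ n / (2 ^ (n + 1) - 1) ∧
      (¬IsCentrallySymmetric K →
        μ.real C / μ.real ((2⁻¹ : ℝ) • (C - C)) < 2 ^ n / (2 ^ (n + 1) - 1)) := by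
  have hpos : 0 < μ.real C := by
    have hint : (interior C).Nonempty :=
      hC ▸ interior_convexHull_nonempty_of_finrank hne hv (by rw [hE, hn])
    have hbdd : Bornology.IsBounded C :=
      hC ▸ isBounded_convexHull.2 (hK.isBounded.union Bornology.isBounded_singleton)
    exact ENNReal.toReal_pos (Measure.measure_pos_of_nonempty_interior μ hint).ne'
      hbdd.measure_lt_top.ne
  obtain ⟨hle, hlt⟩ := mul_measureReal_convexHull_union_singleton_le (μ := μ) hK hK' hne hv hC
  rw [hE, show (2 : ℝ) ^ (n + 1 + 1) - 2 = 2 * (2 ^ (n + 1) - 1) by ring, mul_assoc] at hle hlt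
  have hpow : (0 : ℝ) < 2 ^ (n + 1) - 1 := sub_pos.2 (one_lt_pow₀ one_lt_two n.succ_ne_zero)
  have hhalf : 2 ^ n * μ.real ((2⁻¹ : ℝ) • (C - C)) = μ.real (C - C) / 2 := by
    rw [measureReal_smul_set_of_nonneg (by norm_num), hE, inv_pow, pow_succ]
    field_simp
  have hhalf_pos : 0 < μ.real ((2⁻¹ : ℝ) • (C - C)) := by
    have hsub : 0 < μ.real (C - C) := lt_of_lt_of_le (by positivity) hle
    exact pos_of_mul_pos_right (hhalf.symm ▸ half_pos hsub) (by positivity)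
  rw [div_le_div_iff₀ hhalf_pos hpow, div_lt_div_iff₀ hhalf_pos hpow, hhalf]
  exact ⟨by linarith, fun hsymm ↦ by linarith [hlt hpos hsymm]⟩

end Transfer

/-- For any cone `C = conv (K ∪ {v})` in `ℝ³` over a 2-dimensional convex base `K`
lying in a plane `H` (apex `v ∉ H`), the ratio `Vol(C)/Vol(DC)` is at most `4/7`,
where `DC = (1/2) • (C - C)` is the difference body of `C`; moreover, if `K` is not
centrally symmetric then the ratio is strictly less than `4/7`. -/
theorem cone_volume_ratio_le_four_sevenths
    (H : AffineSubspace ℝ (EuclideanSpace ℝ (Fin 3)))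
    (hH : Module.finrank ℝ H.direction = 2)
    (K : Set (EuclideanSpace ℝ (Fin 3)))
    (hKcompact : IsCompact K) (hKconv : Convex ℝ K)
    (hKH : K ⊆ (H : Set (EuclideanSpace ℝ (Fin 3))))
    (hKdim : affineSpan ℝ K = H)
    (v : EuclideanSpace ℝ (Fin 3)) (hv : v ∉ H) :
    (volume (convexHull ℝ (K ∪ {v}))).toReal /
        (volume ((2⁻¹ : ℝ) • (convexHull ℝ (K ∪ {v}) - convexHull ℝ (K ∪ {v})))).toReal
      ≤ 4 / 7 ∧
    ((¬ ∃ c, ∀ x, x ∈ K ↔ (2 : ℝ) • c - x ∈ K) →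
      (volume (convexHull ℝ (K ∪ {v}))).toReal /
          (volume ((2⁻¹ : ℝ) • (convexHull ℝ (K ∪ {v}) - convexHull ℝ (K ∪ {v})))).toReal
        < 4 / 7) := by
  subst hKdim
  rw [direction_affineSpan] at hH
  have hne : K.Nonempty := nonempty_iff_ne_empty.2 <| by
    rintro rfl
    rw [vectorSpan_empty, finrank_bot] at hH
    omega
  rw [show (4 / 7 : ℝ) = 2 ^ 2 / (2 ^ (2 + 1) - 1) by norm_num]
  exact cone_volume_ratio_le_four_sevenths_general finrank_euclideanSpace_fin hKcompact hKconv hne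
    hH hv rfl
end

section
/- A family of translates {K + vᵢ} of a convex body K in ℝ^d is a packing (pairwise disjoint interiors) if and only if the family {DK + vᵢ} of translates of the difference body DK = (1/2)(K - K) is a packing. -/
open MeasureTheory Pointwise

/-!
The translates `u + int K` and `w + int K` meet exactly when `w - u` lies in `int K - int K`, which
for a convex set with nonempty interior is `int (K - K)`. So whether the translates of `K` by a
family of vectors form a packing depends on `K` only through `K - K`. The difference body
`D = (K - K) / 2` is symmetric and convex, whence `D - D = D + D = K - K`: it has the same
difference set as `K`.
-/

/-- A family of sets is a packing if its members have pairwise disjoint interiors. Members are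
distinguished by index, so a set with nonempty interior may occur only once. -/
def IsPacking {ι X : Type*} [TopologicalSpace X] (F : ι → Set X) : Prop :=
  Pairwise fun i j ↦ Disjoint (interior (F i)) (interior (F j))

/-- The difference body `(K - K) / 2` of a set `K`, normalized so that a convex set symmetric about
the origin is its own difference body. -/
def differenceBody (𝕜 : Type*) {E : Type*} [Field 𝕜] [AddCommGroup E] [Module 𝕜 E] (K : Set E) :
    Set E :=
  (2⁻¹ : 𝕜) • (K - K)

theorem disjoint_vadd_set_vadd_set_iff {G : Type*} [AddCommGroup G] {s t : Set G} {u w : G} :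
    Disjoint (u +ᵥ s) (w +ᵥ t) ↔ w - u ∉ s - t := by
  rw [← not_iff_not, not_not, Set.not_disjoint_iff]
  constructor
  · rintro ⟨_, ⟨a, ha, rfl⟩, b, hb, hab : w + b = u + a⟩
    exact ⟨a, ha, b, hb, sub_eq_sub_iff_add_eq_add.2 (by rw [add_comm, ← hab])⟩
  · rintro ⟨a, ha, b, hb, hab⟩
    exact ⟨u + a, ⟨a, ha, rfl⟩, b, hb, by
      simpa only [vadd_eq_add, add_comm u] using (sub_eq_sub_iff_add_eq_add.1 hab).symm⟩

section DifferenceBody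

variable {𝕜 E : Type*} [Field 𝕜] [AddCommGroup E] [Module 𝕜 E] {K : Set E}

theorem neg_differenceBody : -differenceBody 𝕜 K = differenceBody 𝕜 K := by
  rw [differenceBody, ← Set.smul_set_neg, neg_sub]

theorem interior_differenceBody_nonempty [NeZero (2 : 𝕜)] [TopologicalSpace E]
    [IsTopologicalAddGroup E] [ContinuousConstSMul 𝕜 E] (hK_int : (interior K).Nonempty) :
    (interior (differenceBody 𝕜 K)).Nonempty := by
  rw [differenceBody, interior_smul₀ (inv_ne_zero two_ne_zero)]
  exact ((hK_int.sub hK_int).mono subset_interior_sub).smul_set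

theorem convex_differenceBody [PartialOrder 𝕜] (hK : Convex 𝕜 K) :
    Convex 𝕜 (differenceBody 𝕜 K) :=
  (hK.sub hK).smul _

theorem differenceBody_sub_differenceBody [LinearOrder 𝕜] [IsStrictOrderedRing 𝕜]
    (hK : Convex 𝕜 K) :
    differenceBody 𝕜 K - differenceBody 𝕜 K = K - K :=
  calc differenceBody 𝕜 K - differenceBody 𝕜 K
      = differenceBody 𝕜 K + differenceBody 𝕜 K := by rw [sub_eq_add_neg, neg_differenceBody]
    _ = (2⁻¹ + 2⁻¹ : 𝕜) • (K - K) :=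
      ((hK.sub hK).add_smul (by positivity) (by positivity)).symm
    _ = K - K := by rw [← two_mul, mul_inv_cancel₀ two_ne_zero, one_smul]

end DifferenceBody

section Packing

variable {𝕜 E : Type*} [Field 𝕜] [LinearOrder 𝕜] [IsStrictOrderedRing 𝕜] [TopologicalSpace 𝕜]
  [OrderTopology 𝕜] [AddCommGroup E] [Module 𝕜 E] [TopologicalSpace E] [IsTopologicalAddGroup E]
  [ContinuousSMul 𝕜 E] {s t : Set E}

theorem interior_sub_of_convex (hs : Convex 𝕜 s) (ht : Convex 𝕜 t)
    (hs_int : (interior s).Nonempty) (ht_int : (interior t).Nonempty) :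
    interior (s - t) = interior s - interior t := by
  have h_open : IsOpen (interior s - interior t) := isOpen_interior.sub_right
  have h_convex : Convex 𝕜 (interior s - interior t) := hs.interior.sub ht.interior
  have h_dense : s - t ⊆ closure (interior s - interior t) := by
    rintro _ ⟨a, ha, b, hb, rfl⟩
    have ha' : a ∈ closure (interior s) :=
      hs.closure_interior_eq_closure_of_nonempty_interior hs_int ▸ subset_closure ha
    have hb' : b ∈ closure (interior t) :=
      ht.closure_interior_eq_closure_of_nonempty_interior ht_int ▸ subset_closure hb
    exact map_mem_closure₂ continuous_sub ha' hb' fun _ hx _ hy ↦ Set.sub_mem_sub hx hy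
  refine Set.Subset.antisymm ?_ subset_interior_sub
  calc interior (s - t)
      ⊆ interior (closure (interior s - interior t)) := interior_mono h_dense
    _ = interior (interior s - interior t) :=
      h_convex.interior_closure_eq_interior_of_nonempty_interior
        (h_open.interior_eq.symm ▸ hs_int.sub ht_int)
    _ = interior s - interior t := h_open.interior_eq

theorem disjoint_interior_vadd_iff_of_convex (hs : Convex 𝕜 s) (ht : Convex 𝕜 t)
    (hs_int : (interior s).Nonempty) (ht_int : (interior t).Nonempty) {u w : E} :
    Disjoint (interior (u +ᵥ s)) (interior (w +ᵥ t)) ↔ w - u ∉ interior (s - t) := by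
  rw [interior_vadd, interior_vadd, disjoint_vadd_set_vadd_set_iff,
    interior_sub_of_convex hs ht hs_int ht_int]

theorem isPacking_vadd_iff_of_sub_self_eq {ι : Type*} (hs : Convex 𝕜 s) (ht : Convex 𝕜 t)
    (hs_int : (interior s).Nonempty) (ht_int : (interior t).Nonempty) (h_sub : s - s = t - t)
    (v : ι → E) : IsPacking (fun i ↦ v i +ᵥ s) ↔ IsPacking (fun i ↦ v i +ᵥ t) := by
  simp only [IsPacking, disjoint_interior_vadd_iff_of_convex hs hs hs_int hs_int,
    disjoint_interior_vadd_iff_of_convex ht ht ht_int ht_int, h_sub]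

theorem packing_iff_diff_body_packing_general {ι : Type*} {K : Set E}
    (hK : Convex 𝕜 K) (hK_int : (interior K).Nonempty) (v : ι → E) :
    IsPacking (fun i ↦ v i +ᵥ K) ↔ IsPacking (fun i ↦ v i +ᵥ differenceBody 𝕜 K) :=
  isPacking_vadd_iff_of_sub_self_eq hK (convex_differenceBody hK) hK_int
    (interior_differenceBody_nonempty hK_int) (differenceBody_sub_differenceBody hK).symm v

end Packing

/-- A family of translates `{v i +ᵥ K}` of a convex body `K` in `ℝ^d` is a packing
(pairwise disjoint interiors) if and only if the corresponding family of translates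
of the difference body `DK = (1/2) • (K - K)` is a packing. -/
theorem packing_iff_diff_body_packing (d : ℕ)
    (K : Set (EuclideanSpace ℝ (Fin d)))
    (hKcompact : IsCompact K) (hKconv : Convex ℝ K)
    (hKint : (interior K).Nonempty)
    {ι : Type*} (v : ι → EuclideanSpace ℝ (Fin d)) :
    (∀ i j, i ≠ j →
        Disjoint (interior (v i +ᵥ K)) (interior (v j +ᵥ K))) ↔
    (∀ i j, i ≠ j →
        Disjoint (interior (v i +ᵥ (2⁻¹ : ℝ) • (K - K)))
          (interior (v j +ᵥ (2⁻¹ : ℝ) • (K - K)))) := by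
  exact packing_iff_diff_body_packing_general hKconv hKint v
end

section
/- Every centrally symmetric convex disk (2-dimensional convex body symmetric about a point) of area 1 in the plane is contained in a parallelogram of area at most 4/3. -/
open MeasureTheory
open scoped ENNReal

open Module Set Topology

/-! Measure areas with the area form `ω`, and identify the plane with its dual through `ω`, so that
the polar body `K°` lies in the same plane as `K`. Choose `f, g ∈ K°` with `M = ω f g` as large as
possible. Then `K` lies in the parallelogram `|ω x f| ≤ 1, |ω x g| ≤ 1`, whose area is `4 / M`, and
maximality says precisely that `M⁻¹ K° ⊆ K`, by the bipolar theorem. It remains to show that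
`M⁻¹ K° ⊆ K` forces `K` to have area at least `3 / M`. Inscribe in `K` an affinely regular hexagon
with vertices `±a, ±b, ±(b - a)` on the boundary of `K`. The vector of an edge is up to sign again a
vertex, and a functional supporting `K` there, scaled by `M⁻¹`, is a point of `K`; together with `0`
and the two endpoints of that edge it spans a quadrilateral of area `1 / (2 M)`, so the part of `K`
in the sector over the edge has at least this area, and there are six such sectors. -/

namespace Petty

section RealVectorSpace

variable {V : Type*} [AddCommGroup V] [Module ℝ V] {K : Set V}

/-- The parallelogram with centre `c` whose sides are parallel to `u` and `v`; these vectors are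
half the sides. -/
def parallelogram (c u v : V) : Set V := {x | ∃ a b : ℝ, |a| ≤ 1 ∧ |b| ≤ 1 ∧ x = c + a • u + b • v}

lemma parallelogram_eq_preimage_parallelepiped (c u v : V) :
    parallelogram c u v = (· + (u + v - c)) ⁻¹' parallelepiped ![(2 : ℝ) • u, (2 : ℝ) • v] := by
  ext x
  simp only [parallelogram, Set.mem_preimage, mem_parallelepiped_iff, Fin.sum_univ_two,
    Matrix.cons_val_zero, Matrix.cons_val_one]
  constructor
  · rintro ⟨a, b, ha, hb, rfl⟩
    rw [abs_le] at ha hb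
    refine ⟨![(a + 1) / 2, (b + 1) / 2], ⟨fun i ↦ ?_, fun i ↦ ?_⟩, ?_⟩
    · fin_cases i <;> simp <;> linarith
    · fin_cases i <;> simp <;> linarith
    · simp only [Matrix.cons_val_zero, Matrix.cons_val_one]
      module
  · rintro ⟨t, ⟨ht0, ht1⟩, hx⟩
    have hbound (i : Fin 2) : |2 * t i - 1| ≤ 1 := by
      have h0 : 0 ≤ t i := ht0 i
      have h1 : t i ≤ 1 := ht1 i
      exact abs_le.2 ⟨by linarith, by linarith⟩
    refine ⟨2 * t 0 - 1, 2 * t 1 - 1, hbound 0, hbound 1, ?_⟩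
    rw [eq_sub_of_add_eq hx]
    module

lemma gauge_inv_gauge_smul_self {x : V} (hx : gauge K x ≠ 0) : gauge K ((gauge K x)⁻¹ • x) = 1 := by
  rw [gauge_smul_of_nonneg (inv_nonneg.2 (gauge_nonneg x)), smul_eq_mul, inv_mul_cancel₀ hx]

lemma smul_add_smul_mem_of_zero_mem (hconv : Convex ℝ K) (h0 : 0 ∈ K) {a b : V} (ha : a ∈ K)
    (hb : b ∈ K) {s t : ℝ} (hs : 0 ≤ s) (ht : 0 ≤ t) (hst : s + t ≤ 1) : s • a + t • b ∈ K := by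
  have hsum := hconv.sum_mem (t := Finset.univ) (w := ![s, t, 1 - s - t]) (z := ![a, b, 0])
    (fun i _ ↦ by fin_cases i <;> simp <;> linarith) (by simp [Fin.sum_univ_three])
    (fun i _ ↦ by fin_cases i <;> simp [ha, hb, h0])
  simpa [Fin.sum_univ_three] using hsum

lemma nonneg_of_smul_add_smul_mem_of_one_lt_add (hconv : Convex ℝ K) (habs : Absorbent ℝ K)
    {a b : V} (ha : gauge K a = 1) (hb : gauge K b = 1) {α β : ℝ} (hmem : α • a + β • b ∈ K)
    (hαβ : 1 < α + β) : 0 ≤ α := by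
  by_contra! hα
  have hle : gauge K (β • b) ≤ gauge K (α • a + β • b) + gauge K (-α • a) := by
    simpa using gauge_add_le hconv habs (α • a + β • b) (-α • a)
  rw [gauge_smul_of_nonneg (by linarith), gauge_smul_of_nonneg (by linarith), ha, hb, smul_eq_mul,
    smul_eq_mul] at hle
  linarith [gauge_le_one_of_mem hmem]

end RealVectorSpace

section TopologicalVectorSpace

lemma smul_mem_polar_of_forall_le {V : Type*} [AddCommGroup V] [Module ℝ V] [TopologicalSpace V]
    {K : Set V} (hbal : Balanced ℝ K) {f : StrongDual ℝ V} {r : ℝ} (hr : 0 < r)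
    (hf : ∀ x ∈ K, f x ≤ r) : r⁻¹ • f ∈ StrongDual.polar ℝ K := by
  intro x hx
  have hneg : -f x ≤ r := by simpa using hf _ (hbal.neg_mem_iff.2 hx)
  suffices r⁻¹ * |f x| ≤ 1 by simpa [abs_mul, abs_of_pos hr] using this
  exact inv_mul_le_one_of_le₀ (abs_le'.2 ⟨hf x hx, hneg⟩) hr.le

variable {V : Type*} [AddCommGroup V] [Module ℝ V] [TopologicalSpace V] [IsTopologicalAddGroup V]
  [ContinuousSMul ℝ V] {K : Set V}

lemma mem_nhds_zero_of_convex_of_balanced (hconv : Convex ℝ K) (hbal : Balanced ℝ K)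
    (hint : (interior K).Nonempty) : K ∈ 𝓝 (0 : V) := by
  obtain ⟨x, hx⟩ := hint
  have hmid : (1 / 2 : ℝ) • x + (1 / 2 : ℝ) • -x ∈ interior K :=
    hconv.combo_interior_self_mem_interior hx (hbal.neg_mem_iff.2 (interior_subset hx))
      (by norm_num) (by norm_num) (by norm_num)
  rw [smul_neg, add_neg_cancel] at hmid
  exact mem_interior_iff_mem_nhds.1 hmid

lemma exists_mem_polar_eq_one_of_gauge_eq_one (hconv : Convex ℝ K) (hbal : Balanced ℝ K)
    (hnhds : K ∈ 𝓝 (0 : V)) {v : V} (hv : gauge K v = 1) :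
    ∃ f ∈ StrongDual.polar ℝ K, f v = 1 := by
  have h0 : (0 : V) ∈ interior K := mem_interior_iff_mem_nhds.2 hnhds
  have hvi : v ∉ interior K := by
    rw [← gauge_lt_one_iff_mem_interior hconv hnhds, hv]
    exact lt_irrefl 1
  obtain ⟨f, hf⟩ := geometric_hahn_banach_open_point hconv.interior isOpen_interior hvi
  have hpos : 0 < f v := by simpa using hf 0 h0
  have hle : K ⊆ {x | f x ≤ f v} := by
    refine subset_closure.trans ?_
    rw [← hconv.closure_interior_eq_closure_of_nonempty_interior ⟨0, h0⟩]
    exact closure_minimal (fun x hx ↦ (hf x hx).le) (isClosed_le f.continuous continuous_const)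
  exact ⟨(f v)⁻¹ • f, smul_mem_polar_of_forall_le hbal hpos hle, inv_mul_cancel₀ hpos.ne'⟩

lemma mem_of_forall_mem_polar [LocallyConvexSpace ℝ V] (hconv : Convex ℝ K) (hbal : Balanced ℝ K)
    (hclosed : IsClosed K) (hne : K.Nonempty) {x : V}
    (hx : ∀ f ∈ StrongDual.polar ℝ K, ‖f x‖ ≤ 1) : x ∈ K := by
  by_contra hxK
  obtain ⟨f, r, hfK, hfx⟩ := geometric_hahn_banach_closed_point hconv hclosed hxK
  have hr : 0 < r := by simpa using hfK 0 (hbal.zero_mem hne)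
  have hle : r⁻¹ * f x ≤ 1 := (le_abs_self _).trans
    (hx _ (smul_mem_polar_of_forall_le hbal hr fun y hy ↦ (hfK y hy).le))
  rw [inv_mul_le_iff₀ hr, mul_one] at hle
  exact hfx.not_ge hle

lemma exists_gauge_sub_eq_one [T1Space V] (hrank : 1 < Module.rank ℝ V) (hconv : Convex ℝ K)
    (hbal : Balanced ℝ K) (hnhds : K ∈ 𝓝 0) (hbdd : Bornology.IsVonNBounded ℝ K) {a : V}
    (ha : gauge K a = 1) : ∃ b, gauge K b = 1 ∧ gauge K (b - a) = 1 := by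
  have ha0 : a ≠ 0 := by
    rintro rfl
    simp at ha
  have hcont := continuous_gauge hconv hnhds
  have hgauge {x : V} (hx : x ≠ 0) : gauge K x ≠ 0 :=
    ((gauge_pos (absorbent_nhds_zero hnhds) hbdd).2 hx).ne'
  let n : V → V := fun x ↦ (gauge K x)⁻¹ • x
  have hn : ContinuousOn n {0}ᶜ :=
    (hcont.continuousOn.inv₀ fun x hx ↦ hgauge hx).smul continuousOn_id
  have hleft : gauge K (n a - a) = 0 := by simp [n, ha]
  have hright : gauge K (n (-a) - a) = 2 := by
    have hneg : gauge K (-a) = 1 := by simpa [ha] using gauge_smul hbal (-1 : ℝ) a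
    have : n (-a) - a = (-2 : ℝ) • a := by
      simp only [n, hneg]
      module
    rw [this, gauge_smul hbal, ha]
    norm_num
  -- Radial projection `n` of a path from `a` to `-a` runs along the boundary of `K`, and the gauge
  -- distance to `a` grows from `0` to `2` on the way.
  obtain ⟨x, hx, hxa⟩ : (1 : ℝ) ∈ (fun x ↦ gauge K (n x - a)) '' {0}ᶜ :=
    (isConnected_compl_singleton_of_one_lt_rank hrank (0 : V)).isPreconnected.intermediate_value
      ha0 (neg_ne_zero.2 ha0) (hcont.comp_continuousOn (hn.sub continuousOn_const))
      (by simp [hleft, hright])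
  exact ⟨n x, gauge_inv_gauge_smul_self (hgauge hx), hxa⟩

end TopologicalVectorSpace

section AreaForm

attribute [local instance] FiniteDimensional.of_fact_finrank_eq_two

variable {E : Type*} [NormedAddCommGroup E] [InnerProductSpace ℝ E] [Fact (finrank ℝ E = 2)]
  (o : Orientation ℝ E (Fin 2)) {K : Set E}

local notation "ω" => Orientation.areaForm o

lemma continuous_areaForm : Continuous fun p : E × E ↦ ω p.1 p.2 := by
  simp only [← o.inner_rightAngleRotation_left]
  fun_prop

/-- Cramer's rule. -/
lemma areaForm_smul_eq_add (x y z : E) : ω x y • z = ω z y • x + ω x z • y := by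
  rcases eq_or_ne x 0 with rfl | hx
  · simp
  rw [← sub_eq_zero]
  set d := ω x y • z - (ω z y • x + ω x z • y) with hd
  have hinner : inner ℝ x d = 0 := by
    simp only [hd, inner_sub_right, inner_add_right, inner_smul_right, real_inner_self_eq_norm_sq]
    linarith [o.inner_mul_areaForm_sub x z y, o.areaForm_swap y z]
  have harea : ω x d = 0 := by
    simp [hd]
    ring
  simpa [hinner, harea, hx] using o.inner_sq_add_areaForm_sq x d

lemma linearIndependent_of_areaForm_ne_zero {x y : E} (h : ω x y ≠ 0) :
    LinearIndependent ℝ ![x, y] := by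
  refine LinearIndependent.pair_iff.2 fun s t hst ↦ ⟨?_, ?_⟩
  · simpa [h] using congrArg (ω · y) hst
  · simpa [h] using congrArg (ω x) hst

lemma exists_smul_eq_of_areaForm_eq_zero {x y : E} (hx : x ≠ 0) (h : ω x y = 0) :
    ∃ t : ℝ, t • x = y := by
  have hexp := areaForm_smul_eq_add o x (o.rightAngleRotation x) y
  rw [h, zero_smul, add_zero] at hexp
  have hne : ω x (o.rightAngleRotation x) ≠ 0 := by simpa using hx
  exact ⟨_, by rw [eq_inv_smul_iff₀ hne |>.2 hexp, smul_smul]⟩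

lemma exists_areaForm_eq (f : StrongDual ℝ E) : ∃ w, ∀ x, ω x w = f x := by
  refine ⟨o.rightAngleRotation ((InnerProductSpace.toDual ℝ E).symm f), fun x ↦ ?_⟩
  rw [o.areaForm_rightAngleRotation_right, real_inner_comm, InnerProductSpace.toDual_symm_apply]

lemma exists_mem_areaForm_polar_eq_one (hconv : Convex ℝ K) (hbal : Balanced ℝ K)
    (hnhds : K ∈ 𝓝 0) {v : E} (hv : gauge K v = 1) : ∃ w ∈ (ω).polar K, ω v w = 1 := by
  obtain ⟨f, hf, hfv⟩ := exists_mem_polar_eq_one_of_gauge_eq_one hconv hbal hnhds hv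
  obtain ⟨w, hw⟩ := exists_areaForm_eq o f
  exact ⟨w, fun x hx ↦ by simpa only [hw] using (StrongDual.mem_polar_iff ℝ K).1 hf x hx,
    by rw [hw, hfv]⟩

lemma mem_of_forall_mem_areaForm_polar (hconv : Convex ℝ K) (hbal : Balanced ℝ K)
    (hclosed : IsClosed K) (hne : K.Nonempty) {x : E} (hx : ∀ w ∈ (ω).polar K, ‖ω x w‖ ≤ 1) :
    x ∈ K := by
  refine mem_of_forall_mem_polar hconv hbal hclosed hne fun f hf ↦ ?_
  obtain ⟨w, hw⟩ := exists_areaForm_eq o f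
  rw [← hw]
  exact hx w fun y hy ↦ by simpa only [hw] using (StrongDual.mem_polar_iff ℝ K).1 hf y hy

lemma norm_le_of_mem_areaForm_polar {r : ℝ} (hr : 0 < r) (hK : Metric.closedBall 0 r ⊆ K) {w : E}
    (hw : w ∈ (ω).polar K) : ‖w‖ ≤ r⁻¹ := by
  rcases eq_or_ne w 0 with rfl | hw0
  · simpa using hr.le
  have hmem : (r / ‖w‖) • o.rightAngleRotation w ∈ K := hK <| by
    simp [norm_smul, abs_of_pos hr, hw0]
  have hle : ‖ω ((r / ‖w‖) • o.rightAngleRotation w) w‖ ≤ 1 := hw _ hmem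
  have hval : ω ((r / ‖w‖) • o.rightAngleRotation w) w = -(r * ‖w‖) := by
    rw [map_smul, LinearMap.smul_apply, o.areaForm_rightAngleRotation_left,
      real_inner_self_eq_norm_sq, smul_eq_mul]
    field_simp
  rw [hval, norm_neg, Real.norm_of_nonneg (by positivity)] at hle
  rwa [← one_div, le_div_iff₀' hr]

lemma isCompact_areaForm_polar (hnhds : K ∈ 𝓝 0) : IsCompact ((ω).polar K) := by
  obtain ⟨r, hr, hrK⟩ := Metric.nhds_basis_closedBall.mem_iff.1 hnhds
  refine Metric.isCompact_of_isClosed_isBounded ?_ ?_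
  · rw [LinearMap.polar_eq_iInter]
    exact isClosed_biInter fun x _ ↦
      isClosed_le (ω x).continuous_of_finiteDimensional.norm continuous_const
  · exact (Metric.isBounded_closedBall (x := (0 : E)) (r := r⁻¹)).subset fun w hw ↦
      mem_closedBall_zero_iff.2 (norm_le_of_mem_areaForm_polar o hr hrK hw)

lemma exists_mem_areaForm_polar_pos (hbdd : Bornology.IsBounded K) :
    ∃ f ∈ (ω).polar K, ∃ g ∈ (ω).polar K, 0 < ω f g := by
  obtain ⟨R, hR, hKR⟩ := hbdd.exists_pos_norm_le
  have hpolar {w : E} (hw : ‖w‖ = R⁻¹) : w ∈ (ω).polar K := fun x hx ↦ calc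
    ‖ω x w‖ ≤ ‖x‖ * ‖w‖ := o.abs_areaForm_le x w
    _ ≤ R * R⁻¹ := by
      rw [hw]
      gcongr
      exact hKR x hx
    _ = 1 := mul_inv_cancel₀ hR.ne'
  have : Nontrivial E := nontrivial_of_finrank_eq_succ (Fact.out : finrank ℝ E = 2)
  obtain ⟨e, he⟩ := exists_norm_eq E (inv_nonneg.2 hR.le)
  refine ⟨e, hpolar he, o.rightAngleRotation e, hpolar (by simpa using he), ?_⟩
  rw [o.areaForm_rightAngleRotation_right, real_inner_self_eq_norm_sq, he]
  positivity

lemma exists_maximal_areaForm_polar (hnhds : K ∈ 𝓝 0) (hbdd : Bornology.IsBounded K) :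
    ∃ f ∈ (ω).polar K, ∃ g ∈ (ω).polar K, 0 < ω f g ∧
      ∀ y ∈ (ω).polar K, ∀ z ∈ (ω).polar K, ω y z ≤ ω f g := by
  have hcompact := isCompact_areaForm_polar o hnhds
  obtain ⟨y, hy, z, hz, hyz⟩ := exists_mem_areaForm_polar_pos o hbdd
  obtain ⟨⟨f, g⟩, ⟨hf, hg⟩, hmax⟩ :=
    (hcompact.prod hcompact).exists_isMaxOn ⟨(y, z), hy, hz⟩ (continuous_areaForm o).continuousOn
  have hle : ∀ y ∈ (ω).polar K, ∀ z ∈ (ω).polar K, ω y z ≤ ω f g :=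
    fun y hy z hz ↦ hmax (mk_mem_prod hy hz)
  exact ⟨f, hf, g, hg, hyz.trans_le (hle y hy z hz), hle⟩

lemma inv_smul_mem_of_forall_areaForm_le (hconv : Convex ℝ K) (hbal : Balanced ℝ K)
    (hclosed : IsClosed K) (hne : K.Nonempty) {M : ℝ} (hM : 0 < M)
    (hle : ∀ y ∈ (ω).polar K, ∀ z ∈ (ω).polar K, ω y z ≤ M) {w : E} (hw : w ∈ (ω).polar K) :
    M⁻¹ • w ∈ K := by
  refine mem_of_forall_mem_areaForm_polar o hconv hbal hclosed hne fun z hz ↦ ?_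
  have habs : |ω w z| ≤ M := by
    rw [abs_le', ← o.areaForm_swap]
    exact ⟨hle w hw z hz, hle z hz w hw⟩
  simpa [abs_mul, abs_of_pos hM] using inv_mul_le_one_of_le₀ habs hM.le

lemma exists_gauge_eq_one_areaForm_pos (hconv : Convex ℝ K) (hbal : Balanced ℝ K)
    (hnhds : K ∈ 𝓝 0) (hbdd : Bornology.IsVonNBounded ℝ K) :
    ∃ a b, gauge K a = 1 ∧ gauge K b = 1 ∧ gauge K (b - a) = 1 ∧ 0 < ω a b := by
  have hfinrank : finrank ℝ E = 2 := Fact.out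
  have : Nontrivial E := nontrivial_of_finrank_eq_succ hfinrank
  have hrank : 1 < Module.rank ℝ E := by
    rw [← finrank_eq_rank, hfinrank]
    norm_num
  obtain ⟨e, he⟩ := exists_ne (0 : E)
  set a := (gauge K e)⁻¹ • e
  have ha : gauge K a = 1 :=
    gauge_inv_gauge_smul_self ((gauge_pos (absorbent_nhds_zero hnhds) hbdd).2 he).ne'
  obtain ⟨b, hb, hba⟩ := exists_gauge_sub_eq_one hrank hconv hbal hnhds hbdd ha
  have hne : ω a b ≠ 0 := by
    intro hzero
    have ha0 : a ≠ 0 := by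
      intro h
      simp [h] at ha
    obtain ⟨t, rfl⟩ := exists_smul_eq_of_areaForm_eq_zero o ha0 hzero
    have ht : |t| = 1 := by simpa [gauge_smul hbal, ha] using hb
    have ht' : |t - 1| = 1 := by
      rw [show t • a - a = (t - 1) • a by module] at hba
      simpa [gauge_smul hbal, ha] using hba
    rcases eq_or_eq_neg_of_abs_eq ht with rfl | rfl <;> norm_num at ht'
  rcases hne.lt_or_gt with hneg | hpos
  · have hab : gauge K (a - b) = 1 := by simpa [hba] using gauge_smul hbal (-1 : ℝ) (b - a)
    exact ⟨b, a, hb, ha, hab, by rw [o.areaForm_swap]; linarith⟩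
  · exact ⟨a, b, ha, hb, hba, hpos⟩

lemma subset_parallelogram_of_mem_areaForm_polar {f g : E} (hf : f ∈ (ω).polar K)
    (hg : g ∈ (ω).polar K) (hfg : ω f g ≠ 0) :
    K ⊆ parallelogram 0 ((ω f g)⁻¹ • f) ((ω f g)⁻¹ • g) := by
  intro x hx
  refine ⟨ω x g, ω f x, hg x hx, ?_, ?_⟩
  · rw [o.areaForm_swap, abs_neg]
    exact hf x hx
  · refine ((eq_inv_smul_iff₀ hfg).2 (areaForm_smul_eq_add o f g x)).trans ?_
    module

/-- The open sector swept by the directions from `a` counterclockwise (for `o`) to `b`, as an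
intersection of two half-planes; this encoding is meant for angles of at most `π`, that is for
`0 < ω a b` or `b = -a`. -/
def sector (a b : E) : Set E := {x | 0 < ω a x ∧ 0 < ω x b}

lemma measurableSet_sector [MeasurableSpace E] [BorelSpace E] (a b : E) :
    MeasurableSet (sector o a b) :=
  ((isOpen_lt continuous_const (ω a).continuous_of_finiteDimensional).inter
    (isOpen_lt continuous_const ((ω).flip b).continuous_of_finiteDimensional)).measurableSet

lemma disjoint_sector (a b c : E) : Disjoint (sector o a b) (sector o b c) := by
  refine Set.disjoint_left.2 fun x hab hbc ↦ ?_
  have := o.areaForm_swap x b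
  linarith [hab.2, hbc.1]

lemma sector_add_subset_left {a b : E} {α β : ℝ} (hα : 0 ≤ α) (hβ : 0 ≤ β) :
    sector o a (α • a + β • b) ⊆ sector o a b := by
  rintro x ⟨hax, hxw⟩
  refine ⟨hax, pos_of_mul_pos_right ?_ hβ⟩
  simp only [map_add, map_smul, smul_eq_mul, o.areaForm_swap x a] at hxw
  linarith [mul_nonneg hα hax.le]

lemma sector_add_subset_right {a b : E} {α β : ℝ} (hα : 0 ≤ α) (hβ : 0 ≤ β) :
    sector o (α • a + β • b) b ⊆ sector o a b := by
  rintro x ⟨hwx, hxb⟩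
  refine ⟨pos_of_mul_pos_right ?_ hα, hxb⟩
  simp only [map_add, map_smul, LinearMap.add_apply, LinearMap.smul_apply, smul_eq_mul,
    o.areaForm_swap b x] at hwx
  linarith [mul_nonneg hβ hxb.le]

lemma neg_sector_neg_self (a : E) : -sector o a (-a) = sector o (-a) a := by
  ext x
  simp [sector, o.areaForm_swap x a]

end AreaForm

section Volume

attribute [local instance] FiniteDimensional.of_fact_finrank_eq_two

variable {E : Type*} [NormedAddCommGroup E] [InnerProductSpace ℝ E] [Fact (finrank ℝ E = 2)]
  [MeasurableSpace E] [BorelSpace E] (o : Orientation ℝ E (Fin 2)) {K : Set E}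

local notation "ω" => Orientation.areaForm o

lemma volume_parallelepiped_pair (u v : E) :
    volume (parallelepiped ![u, v]) = ENNReal.ofReal |ω u v| := by
  rw [← o.measure_eq_volume, AlternatingMap.measure_parallelepiped, o.areaForm_to_volumeForm]

lemma volume_parallelogram (c u v : E) :
    volume (parallelogram c u v) = ENNReal.ofReal (4 * |ω u v|) := by
  rw [parallelogram_eq_preimage_parallelepiped, measure_preimage_add_right,
    volume_parallelepiped_pair o]
  congr 1
  simp [abs_mul]
  ring

lemma ofReal_abs_areaForm_le_two_mul_volume_convexHull (a b : E) :
    ENNReal.ofReal |ω a b| ≤ 2 * volume (convexHull ℝ {0, a, b}) := by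
  set T := convexHull ℝ {0, a, b}
  have hT : Convex ℝ T := convex_convexHull ℝ _
  obtain ⟨h0, ha, hb⟩ : 0 ∈ T ∧ a ∈ T ∧ b ∈ T := by
    refine ⟨?_, ?_, ?_⟩ <;> exact subset_convexHull ℝ _ (by simp)
  -- The triangle and its reflection in the midpoint of its side from `a` to `b`.
  have hcover : parallelepiped ![a, b] ⊆ T ∪ (a + b - ·) ⁻¹' T := by
    rintro _ ⟨t, ⟨ht0, ht1⟩, rfl⟩
    simp only [Fin.sum_univ_two, Matrix.cons_val_zero, Matrix.cons_val_one]
    rcases le_total (t 0 + t 1) 1 with hle | hge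
    · exact .inl (smul_add_smul_mem_of_zero_mem hT h0 ha hb (ht0 0) (ht0 1) hle)
    · right
      have hmem := smul_add_smul_mem_of_zero_mem hT h0 ha hb (sub_nonneg.2 (ht1 0))
        (sub_nonneg.2 (ht1 1)) (by simp only [Pi.one_apply]; linarith)
      rw [Set.mem_preimage]
      convert hmem using 1
      simp only [Pi.one_apply]
      module
  calc ENNReal.ofReal |ω a b| = volume (parallelepiped ![a, b]) :=
        (volume_parallelepiped_pair o a b).symm
    _ ≤ volume T + volume ((a + b - ·) ⁻¹' T) := (measure_mono hcover).trans (measure_union_le _ _)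
    _ = 2 * volume T := by
        rw [(Measure.measurePreserving_sub_left volume (a + b)).measure_preimage
          ((toFinite _).isCompact_convexHull ℝ).nullMeasurableSet, two_mul]

lemma ae_areaForm_ne_zero {a b : E} (hab : ω a b ≠ 0) : ∀ᵐ x, ω a x ≠ 0 :=
  measure_eq_zero_iff_ae_notMem.1 <|
    Measure.addHaar_submodule volume (LinearMap.ker (ω a)) fun htop ↦
      hab (LinearMap.mem_ker.1 (htop ▸ Submodule.mem_top))

lemma ofReal_areaForm_div_two_le_volume_inter_sector (hconv : Convex ℝ K) (h0 : 0 ∈ K) {a b : E}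
    (ha : a ∈ K) (hb : b ∈ K) : ENNReal.ofReal (ω a b / 2) ≤ volume (K ∩ sector o a b) := by
  rcases le_or_gt (ω a b) 0 with hab | hab
  · simp [ENNReal.ofReal_of_nonpos (by linarith : ω a b / 2 ≤ 0)]
  have hsector : ∀ x ∈ convexHull ℝ {0, a, b}, 0 ≤ ω a x ∧ 0 ≤ ω x b := by
    have hconv' : Convex ℝ {x | 0 ≤ ω a x ∧ 0 ≤ ω x b} :=
      (convex_halfSpace_ge (ω a).isLinear 0).inter (convex_halfSpace_ge ((ω).flip b).isLinear 0)
    refine convexHull_min ?_ hconv'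
    rintro x (rfl | rfl | rfl) <;> constructor <;> simp [hab.le]
  have hba : ω b a ≠ 0 := by
    rw [o.areaForm_swap]
    exact neg_ne_zero.2 hab.ne'
  have hae : convexHull ℝ {0, a, b} ≤ᵐ[volume] (K ∩ sector o a b : Set E) := by
    filter_upwards [ae_areaForm_ne_zero o hab.ne', ae_areaForm_ne_zero o hba] with x hax hbx hx
    have hxb : ω x b ≠ 0 := by
      rw [o.areaForm_swap]
      exact neg_ne_zero.2 hbx
    exact ⟨convexHull_min (by simp [insert_subset_iff, h0, ha, hb]) hconv hx,
      (hsector x hx).1.lt_of_ne' hax, (hsector x hx).2.lt_of_ne' hxb⟩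
  rw [ENNReal.ofReal_div_of_pos two_pos, ENNReal.ofReal_ofNat]
  refine ENNReal.div_le_of_le_mul' ?_
  calc ENNReal.ofReal (ω a b) ≤ 2 * volume (convexHull ℝ {0, a, b}) := by
        simpa [abs_of_pos hab] using ofReal_abs_areaForm_le_two_mul_volume_convexHull o a b
    _ ≤ 2 * volume (K ∩ sector o a b) := by gcongr 2 * ?_; exact measure_mono_ae hae

lemma volume_inter_sector_add_le (hK : MeasurableSet K) {a b c : E} {S : Set E}
    (hab : sector o a b ⊆ S) (hbc : sector o b c ⊆ S) :
    volume (K ∩ sector o a b) + volume (K ∩ sector o b c) ≤ volume (K ∩ S) := by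
  rw [← measure_union ((disjoint_sector o a b c).mono inter_subset_right inter_subset_right)
    (hK.inter (measurableSet_sector o b c)), ← inter_union_distrib_left]
  gcongr
  exact union_subset hab hbc

lemma ofReal_areaForm_sub_div_two_le_volume_inter_sector (hconv : Convex ℝ K) (hnhds : K ∈ 𝓝 0)
    (hclosed : IsClosed K) {a b w : E} (ha : gauge K a = 1) (hb : gauge K b = 1)
    (hab : 0 < ω a b) (hw : w ∈ K) :
    ENNReal.ofReal (ω w (b - a) / 2) ≤ volume (K ∩ sector o a b) := by
  have h0 : 0 ∈ K := mem_of_mem_nhds hnhds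
  have habs : Absorbent ℝ K := absorbent_nhds_zero hnhds
  have hmem {x : E} (hx : gauge K x = 1) : x ∈ K :=
    hclosed.closure_eq ▸ (gauge_le_one_iff_mem_closure hconv hnhds).1 hx.le
  obtain ⟨α, β, rfl⟩ : ∃ α β : ℝ, w = α • a + β • b :=
    ⟨(ω a b)⁻¹ * ω w b, (ω a b)⁻¹ * ω a w, by
      refine ((eq_inv_smul_iff₀ hab.ne').2 (areaForm_smul_eq_add o a b w)).trans ?_
      module⟩
  have haw : ω a (α • a + β • b) = β * ω a b := by simp
  have hwb : ω (α • a + β • b) b = α * ω a b := by simp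
  have hedge : ω (α • a + β • b) (b - a) = (α + β) * ω a b := by
    rw [map_sub, hwb, o.areaForm_swap _ a, haw]
    ring
  -- If `w` lies below the chord from `a` to `b`, the triangle `0, a, b` is already large enough;
  -- otherwise cut the quadrilateral `0, a, w, b` along its diagonal from `0` to `w`.
  rcases le_or_gt (α + β) 1 with hle | hlt
  · refine le_trans (ENNReal.ofReal_le_ofReal ?_)
      (ofReal_areaForm_div_two_le_volume_inter_sector o hconv h0 (hmem ha) (hmem hb))
    rw [hedge]
    gcongr
    exact mul_le_of_le_one_left hab.le hle
  have hα : 0 ≤ α := nonneg_of_smul_add_smul_mem_of_one_lt_add hconv habs ha hb hw hlt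
  have hβ : 0 ≤ β := nonneg_of_smul_add_smul_mem_of_one_lt_add hconv habs hb ha
    (add_comm (α • a) _ ▸ hw) (add_comm α β ▸ hlt)
  set w := α • a + β • b
  calc ENNReal.ofReal (ω w (b - a) / 2) = ENNReal.ofReal (ω a w / 2 + ω w b / 2) := by
        rw [hedge, haw, hwb]
        ring_nf
    _ ≤ ENNReal.ofReal (ω a w / 2) + ENNReal.ofReal (ω w b / 2) := ENNReal.ofReal_add_le
    _ ≤ volume (K ∩ sector o a w) + volume (K ∩ sector o w b) := add_le_add
        (ofReal_areaForm_div_two_le_volume_inter_sector o hconv h0 (hmem ha) hw)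
        (ofReal_areaForm_div_two_le_volume_inter_sector o hconv h0 hw (hmem hb))
    _ ≤ volume (K ∩ sector o a b) := volume_inter_sector_add_le o hclosed.measurableSet
        (sector_add_subset_left o hα hβ) (sector_add_subset_right o hα hβ)

lemma ofReal_div_two_le_volume_inter_sector (hconv : Convex ℝ K) (hbal : Balanced ℝ K)
    (hnhds : K ∈ 𝓝 0) (hclosed : IsClosed K) {m : ℝ} (hm : ∀ w ∈ (ω).polar K, m • w ∈ K) {a b : E}
    (ha : gauge K a = 1) (hb : gauge K b = 1) (hba : gauge K (b - a) = 1) (hab : 0 < ω a b) :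
    ENNReal.ofReal (m / 2) ≤ volume (K ∩ sector o a b) := by
  obtain ⟨w, hw, hw1⟩ := exists_mem_areaForm_polar_eq_one o hconv hbal hnhds hba
  have hmw : ω (-(m • w)) (b - a) = m := by
    rw [o.areaForm_swap, map_neg, map_smul, hw1]
    simp
  simpa only [hmw] using ofReal_areaForm_sub_div_two_le_volume_inter_sector o hconv hnhds hclosed
    ha hb hab (hbal.neg_mem_iff.2 (hm w hw))

lemma two_mul_volume_inter_sector_neg_self_le (hbal : Balanced ℝ K) (hK : MeasurableSet K)
    (a : E) : 2 * volume (K ∩ sector o a (-a)) ≤ volume K := by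
  have hneg : K ∩ sector o (-a) a = -(K ∩ sector o a (-a)) := by
    rw [Set.inter_neg, neg_sector_neg_self]
    congr 1
    ext x
    exact hbal.neg_mem_iff.symm
  calc 2 * volume (K ∩ sector o a (-a))
      = volume (K ∩ sector o a (-a)) + volume (K ∩ sector o (-a) a) := by
        rw [hneg, Measure.measure_neg, two_mul]
    _ ≤ volume (K ∩ univ) :=
        volume_inter_sector_add_le o hK (subset_univ _) (subset_univ _)
    _ = volume K := by rw [inter_univ]

lemma volume_inter_sector_add_add_le (hK : MeasurableSet K) (a b : E) :
    volume (K ∩ sector o a b) +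
        (volume (K ∩ sector o b (b - a)) + volume (K ∩ sector o (b - a) (-a))) ≤
      volume (K ∩ sector o a (-a)) := by
  have hsub : b - a = (1 : ℝ) • b + (1 : ℝ) • -a := by module
  calc volume (K ∩ sector o a b) +
        (volume (K ∩ sector o b (b - a)) + volume (K ∩ sector o (b - a) (-a)))
      ≤ volume (K ∩ sector o a b) + volume (K ∩ sector o b (-a)) := by
        rw [hsub]
        gcongr
        exact volume_inter_sector_add_le o hK (sector_add_subset_left o zero_le_one zero_le_one)
          (sector_add_subset_right o zero_le_one zero_le_one)
    _ ≤ volume (K ∩ sector o a (-a)) := volume_inter_sector_add_le o hK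
        (fun x hx ↦ ⟨hx.1, by simpa [o.areaForm_swap x a] using hx.1⟩)
        (fun x hx ↦ ⟨by simpa [o.areaForm_swap x a] using hx.2, hx.2⟩)

lemma ofReal_three_mul_le_volume (hconv : Convex ℝ K) (hbal : Balanced ℝ K) (hnhds : K ∈ 𝓝 0)
    (hcompact : IsCompact K) {m : ℝ} (hm : ∀ w ∈ (ω).polar K, m • w ∈ K) :
    ENNReal.ofReal (3 * m) ≤ volume K := by
  obtain ⟨a, b, ha, hb, hba, hab⟩ := exists_gauge_eq_one_areaForm_pos o hconv hbal hnhds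
    ((NormedSpace.isVonNBounded_iff ℝ).2 hcompact.isBounded)
  have hK : MeasurableSet K := hcompact.measurableSet
  have hneg (x : E) : gauge K (-x) = gauge K x := by simpa using gauge_smul hbal (-1 : ℝ) x
  have harea {x y : E} := ofReal_div_two_le_volume_inter_sector o hconv hbal hnhds
    hcompact.isClosed hm (a := x) (b := y)
  have hfirst : ENNReal.ofReal (m / 2) ≤ volume (K ∩ sector o a b) := harea ha hb hba hab
  have hsecond : ENNReal.ofReal (m / 2) ≤ volume (K ∩ sector o b (b - a)) :=
    harea hb hba (by simpa [hneg] using ha) (by simpa [o.areaForm_swap b a] using hab)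
  have hthird : ENNReal.ofReal (m / 2) ≤ volume (K ∩ sector o (b - a) (-a)) :=
    harea hba (by rw [hneg, ha]) (by rw [show -a - (b - a) = -b by abel, hneg, hb])
      (by simpa [o.areaForm_swap b a] using hab)
  calc ENNReal.ofReal (3 * m) = 2 * (3 * ENNReal.ofReal (m / 2)) := by
        rw [← ENNReal.ofReal_ofNat 2, ← ENNReal.ofReal_ofNat 3, ← ENNReal.ofReal_mul (by norm_num),
          ← ENNReal.ofReal_mul (by norm_num)]
        ring_nf
    _ = 2 * (ENNReal.ofReal (m / 2) + (ENNReal.ofReal (m / 2) + ENNReal.ofReal (m / 2))) := by ring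
    _ ≤ 2 * volume (K ∩ sector o a (-a)) := by
        gcongr
        exact (add_le_add hfirst (add_le_add hsecond hthird)).trans
          (volume_inter_sector_add_add_le o hK a b)
    _ ≤ volume K := two_mul_volume_inter_sector_neg_self_le o hbal hK a

end Volume

end Petty

open Petty

attribute [local instance] FiniteDimensional.of_fact_finrank_eq_two in
theorem symmetric_disk_in_parallelogram_general {E : Type*} [NormedAddCommGroup E]
    [InnerProductSpace ℝ E] [Fact (finrank ℝ E = 2)] [MeasurableSpace E] [BorelSpace E]
    (K : Set E) (hKc : IsCompact K) (hKv : Convex ℝ K) (hKi : (interior K).Nonempty)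
    (hKsym : K = -K) :
    ∃ c u v : E, LinearIndependent ℝ ![u, v] ∧ K ⊆ parallelogram c u v ∧
      volume (parallelogram c u v) ≤ ENNReal.ofReal (4 / 3) * volume K := by
  let o : Orientation ℝ E (Fin 2) :=
    ((stdOrthonormalBasis ℝ E).reindex (finCongr Fact.out)).toBasis.orientation
  have hbal : Balanced ℝ K := (balanced_iff_neg_mem hKv).2 fun x hx ↦ by rwa [hKsym] at hx
  have hnhds : K ∈ 𝓝 0 := mem_nhds_zero_of_convex_of_balanced hKv hbal hKi
  obtain ⟨f, hf, g, hg, hpos, hmax⟩ := exists_maximal_areaForm_polar o hnhds hKc.isBounded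
  set M := o.areaForm f g
  have harea : ENNReal.ofReal (3 * M⁻¹) ≤ volume K :=
    ofReal_three_mul_le_volume o hKv hbal hnhds hKc fun w hw ↦
      inv_smul_mem_of_forall_areaForm_le o hKv hbal hKc.isClosed ⟨0, mem_of_mem_nhds hnhds⟩
        hpos hmax hw
  have huv : o.areaForm (M⁻¹ • f) (M⁻¹ • g) = M⁻¹ := by
    rw [map_smul, map_smul, LinearMap.smul_apply, smul_eq_mul, smul_eq_mul,
      inv_mul_cancel₀ hpos.ne', mul_one]
  refine ⟨0, M⁻¹ • f, M⁻¹ • g, linearIndependent_of_areaForm_ne_zero o ?_,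
    subset_parallelogram_of_mem_areaForm_polar o hf hg hpos.ne', ?_⟩
  · rw [huv]
    exact inv_ne_zero hpos.ne'
  calc volume (parallelogram 0 (M⁻¹ • f) (M⁻¹ • g))
      = ENNReal.ofReal (4 / 3 * (3 * M⁻¹)) := by
        rw [volume_parallelogram o, huv, abs_of_pos (inv_pos.2 hpos)]
        ring_nf
    _ = ENNReal.ofReal (4 / 3) * ENNReal.ofReal (3 * M⁻¹) := ENNReal.ofReal_mul (by norm_num)
    _ ≤ ENNReal.ofReal (4 / 3) * volume K := by gcongr

/-- Petty's theorem: every centrally symmetric convex disk of area `1` in the plane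
(a compact convex set `K ⊆ ℝ²` with nonempty interior and `K = -K`) is contained in a
parallelogram of area at most `4/3`. -/
theorem symmetric_disk_in_parallelogram
    (K : Set (EuclideanSpace ℝ (Fin 2)))
    (hKc : IsCompact K) (hKv : Convex ℝ K) (hKi : (interior K).Nonempty)
    (hKsym : K = -K) (hKarea : volume K = 1) :
    ∃ (c u v : EuclideanSpace ℝ (Fin 2)), LinearIndependent ℝ ![u, v] ∧
      K ⊆ {x | ∃ a b : ℝ, |a| ≤ 1 ∧ |b| ≤ 1 ∧ x = c + a • u + b • v} ∧
      volume {x | ∃ a b : ℝ, |a| ≤ 1 ∧ |b| ≤ 1 ∧ x = c + a • u + b • v} ≤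
        ENNReal.ofReal (4 / 3) := by
  have : Fact (finrank ℝ (EuclideanSpace ℝ (Fin 2)) = 2) := ⟨finrank_euclideanSpace_fin⟩
  simpa only [parallelogram, hKarea, mul_one] using
    symmetric_disk_in_parallelogram_general K hKc hKv hKi hKsym
end

section
/- Every centrally symmetric convex hexagon H is contained in a parallelogram P whose area is at most 4/3 times the area of H, where the sides of P lie on lines extending sides of H. -/
open MeasureTheory
open scoped ENNReal

/-!
Write `a, b, d, -a, -b, -d` for the vertices relative to the centre. Since the vertices are in
cyclic order, `z • b = y • a + x • d` with `x, y, z > 0`: up to a common factor, `x`, `y`, `z` are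
the areas of the triangles that the centre spans with the sides `[a, b]`, `[b, d]`, `[d, -a]`, and
since every vertex is extreme they satisfy the triangle inequalities. Number the vertices so that
`z` is the smallest, and extend the other two pairs of sides to a parallelogram `{±u ± v}` with
corner `b = u - v`. In the basis `(u, v)` the hexagon has vertices
`±((x - z) / y, 1)`, `±(1, -1)`, `±(1, (y - z) / x)`, and these two coordinates lie in `[0, 1]`.
Hence the hexagon contains the midpoints `±u`, `±v` of the sides and the corners `±(u - v)`, that
is, all of the parallelogram except two corner triangles, which slide together into a quarter of it.
-/

section Convex

variable {E : Type*} [AddCommGroup E] [Module ℝ E] {S : Set E} {c : E}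

lemma add_smul_add_smul_mem_of_convex (hS : Convex ℝ S) {y z : E} (hc : c ∈ S)
    (hy : c + y ∈ S) (hz : c + z ∈ S) {s t : ℝ} (hs : 0 ≤ s) (ht : 0 ≤ t) (hst : s + t ≤ 1) :
    c + (s • y + t • z) ∈ S := by
  have hsum := hS.sum_mem (t := Finset.univ) (w := ![1 - s - t, s, t]) (z := ![c, c + y, c + z])
    (by simpa [Fin.forall_fin_succ, hs, ht, le_sub_iff_add_le'] using hst)
    (by simp only [Fin.sum_univ_three, Matrix.cons_val]; ring)
    (by simp [Fin.forall_fin_succ, hc, hy, hz])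
  convert hsum using 1
  simp only [Fin.sum_univ_three, Matrix.cons_val]
  module

lemma mem_segment_add_smul_add_smul (q w : E) {s t : ℝ} (hs : s ≤ 0) (ht : 0 ≤ t) :
    q ∈ segment ℝ (q + s • w) (q + t • w) := by
  rw [mem_segment_iff_sameRay, sub_add_cancel_left, add_sub_cancel_left, ← neg_smul]
  exact ((SameRay.refl w).nonneg_smul_left (neg_nonneg.2 hs)).nonneg_smul_right ht

lemma smul_mem_segment_neg_self (x : E) {r : ℝ} (hr : |r| ≤ 1) : r • x ∈ segment ℝ (-x) x := by
  obtain ⟨hr₁, hr₂⟩ := abs_le.1 hr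
  exact ⟨(1 - r) / 2, (1 + r) / 2, by linarith, by linarith, by ring, by module⟩

lemma linearIndependent_pair_of_notMem_segment {x y : E} (hx : x ∉ segment ℝ (-y) y)
    (hy : y ∉ segment ℝ (-x) x) : LinearIndependent ℝ ![x, y] := by
  have hx₀ : x ≠ 0 := by
    rintro rfl
    exact hx (by simpa using smul_mem_segment_neg_self y (r := 0) (by simp))
  refine (LinearIndependent.pair_iff' hx₀).2 fun r hr ↦ ?_
  rcases le_or_gt |r| 1 with hr₁ | hr₁
  · exact hy (hr ▸ smul_mem_segment_neg_self x hr₁)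
  · have hr₀ : r ≠ 0 := by
      rintro rfl
      norm_num at hr₁
    rw [← eq_inv_smul_iff₀ hr₀] at hr
    have hinv : |r⁻¹| ≤ 1 := abs_inv r ▸ inv_le_one_of_one_le₀ hr₁.le
    exact hx (hr ▸ smul_mem_segment_neg_self y hinv)

lemma center_mem_of_symm (hS : Convex ℝ S) (hsymm : ∀ w, c + w ∈ S → c - w ∈ S) {w : E}
    (hw : c + w ∈ S) : c ∈ S := by
  simpa using hS.midpoint_mem hw (hsymm w hw)

lemma add_smul_mem_affineSpan_pair {x y q w : E} {s t : ℝ} (hst : s ≠ t) (hx : x = q + s • w)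
    (hy : y = q + t • w) (r : ℝ) : q + r • w ∈ line[ℝ, x, y] := by
  subst hx hy
  have hts : t - s ≠ 0 := sub_ne_zero.2 hst.symm
  convert AffineMap.lineMap_mem_affineSpan_pair ((r - s) / (t - s)) (q + s • w) (q + t • w) using 1
  rw [AffineMap.lineMap_apply_module']
  match_scalars <;> field_simp <;> ring

end Convex

section Interior

variable {E : Type*} [AddCommGroup E] [Module ℝ E] [TopologicalSpace E] [IsTopologicalAddGroup E]
  [ContinuousConstSMul ℝ E] {S : Set E} {c : E}

lemma add_le_one_of_segment_subset_frontier (hS : Convex ℝ S) {x y : E} (hc : c ∈ interior S)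
    (hxy : segment ℝ x y ⊆ frontier S) {s t : ℝ} (hs : 0 ≤ s) (ht : 0 ≤ t)
    (hst : c + (s • (x - c) + t • (y - c)) ∈ S) : s + t ≤ 1 := by
  by_contra! h
  have hpos : 0 < s + t := by linarith
  have hfrontier : (s / (s + t)) • x + (t / (s + t)) • y ∈ frontier S :=
    hxy ⟨_, _, by positivity, by positivity, by field_simp, rfl⟩
  have hinterior := hS.combo_interior_self_mem_interior hc hst (a := 1 - 1 / (s + t))
    (b := 1 / (s + t)) (by rw [sub_pos, div_lt_one hpos]; exact h) (by positivity) (by ring)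
  refine hfrontier.2 ?_
  convert hinterior using 1
  match_scalars <;> field_simp
  ring

lemma center_mem_interior_of_symm (hS : Convex ℝ S) (hsymm : ∀ w, c + w ∈ S → c - w ∈ S)
    (hne : (interior S).Nonempty) : c ∈ interior S := by
  have hreflect : ((2 : ℝ) • c - ·) ⁻¹' interior S ⊆ interior S := by
    refine interior_maximal (fun x hx ↦ ?_) (isOpen_interior.preimage (by fun_prop))
    have hx' : c + (c - x) ∈ S := by
      convert interior_subset hx using 1
      module
    simpa using hsymm _ hx'
  obtain ⟨x, hx⟩ := hne
  have hx' : (2 : ℝ) • c - x ∈ interior S := hreflect (by simpa using hx)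
  convert hS.interior.midpoint_mem hx hx' using 1
  rw [midpoint_eq_smul_add, add_sub_cancel, invOf_smul_smul]

end Interior

lemma interior_nonempty_of_linearIndependent {E ι : Type*} [NormedAddCommGroup E] [NormedSpace ℝ E]
    [FiniteDimensional ℝ E] [Fintype ι] {S : Set E} {c : E} (hS : Convex ℝ S) (hc : c ∈ S)
    {b : ι → E} (hb : LinearIndependent ℝ b) (hcard : Fintype.card ι = Module.finrank ℝ E)
    (hbS : ∀ i, c + b i ∈ S) :
    (interior S).Nonempty := by
  rw [hS.interior_nonempty_iff_affineSpan_eq_top,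
    ← AffineSubspace.direction_eq_top_iff_of_nonempty ⟨c, subset_affineSpan ℝ S hc⟩, eq_top_iff,
    ← hb.span_eq_top_of_card_eq_finrank' hcard, Submodule.span_le]
  rintro _ ⟨i, rfl⟩
  simpa using AffineSubspace.vsub_mem_direction (subset_affineSpan ℝ S (hbS i))
    (subset_affineSpan ℝ S hc)

section Area

/-- The affine regular hexagon with vertices `±(1, 0)`, `±(0, 1)`, `±(1, -1)`: the square
`[-1, 1]²` with the two corners at `±(1, 1)` cut off. -/
def unitHexagon : Set (Fin 2 → ℝ) := {x | x ∈ Set.Icc (-1) 1 ∧ |x 0 + x 1| ≤ 1}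

lemma three_le_volume_unitHexagon : 3 ≤ volume unitHexagon := by
  let upper : Set (Fin 2 → ℝ) := {x | x ≤ 1 ∧ 1 < x 0 + x 1}
  let lower : Set (Fin 2 → ℝ) := {x | -1 ≤ x ∧ x 0 + x 1 < -1}
  let slid : Set (Fin 2 → ℝ) := (fun x ↦ -1 + x) ⁻¹' lower
  have hmeas : MeasurableSet upper := measurableSet_Iic.inter
    (isOpen_lt (continuous_const (y := (1 : ℝ))) (by fun_prop)).measurableSet
  have hdisj : Disjoint slid upper := by
    refine Set.disjoint_left.2 fun x hx₂ hx₁ ↦ ?_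
    have := hx₂.2
    simp only [Pi.add_apply, Pi.neg_apply, Pi.one_apply] at this
    linarith [hx₁.2]
  have hsub : slid ∪ upper ⊆ Set.Icc 0 1 := by
    rintro x (⟨hx, hsum⟩ | ⟨hx, hsum⟩) <;>
      simp only [Pi.le_def, Fin.forall_fin_two, Set.mem_Icc, Pi.zero_apply, Pi.one_apply,
        Pi.neg_apply, Pi.add_apply] at hx hsum ⊢ <;>
      grind
  have htriangles : volume lower + volume upper ≤ 1 := calc
    volume lower + volume upper = volume (slid ∪ upper) := by
      rw [measure_union hdisj hmeas, measure_preimage_add]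
    _ ≤ volume (Set.Icc (0 : Fin 2 → ℝ) 1) := measure_mono hsub
    _ = 1 := by simp [Real.volume_Icc_pi]
  have hcover : Set.Icc (-1) 1 ⊆ unitHexagon ∪ (lower ∪ upper) := by
    intro x hx
    rcases lt_or_ge (x 0 + x 1) (-1) with hlt | hge
    · exact .inr (.inl ⟨hx.1, hlt⟩)
    rcases lt_or_ge 1 (x 0 + x 1) with hgt | hle
    · exact .inr (.inr ⟨hx.2, hgt⟩)
    · exact .inl ⟨hx, abs_le.2 ⟨hge, hle⟩⟩
  refine (ENNReal.add_le_add_iff_right ENNReal.one_ne_top).1 ?_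
  calc (3 : ℝ≥0∞) + 1 = volume (Set.Icc (-1 : Fin 2 → ℝ) 1) := by
        norm_num [Real.volume_Icc_pi]
    _ ≤ volume unitHexagon + volume (lower ∪ upper) :=
        (measure_mono hcover).trans (measure_union_le _ _)
    _ ≤ volume unitHexagon + 1 := by
        gcongr
        exact (measure_union_le _ _).trans htriangles

section Coordinates

variable {E : Type*} [AddCommGroup E] [Module ℝ E]

/-- The parallelogram with centre `q` and sides `2 • u` and `2 • v`. -/
def parallelogram (q u v : E) : Set E := {x | ∃ a b : ℝ, |a| ≤ 1 ∧ |b| ≤ 1 ∧ x = q + a • u + b • v}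

lemma parallelogram_eq_image (q u v : E) :
    parallelogram q u v =
      (q + ·) '' (Fintype.linearCombination ℝ ![u, v] '' Set.Icc (-1 : Fin 2 → ℝ) 1) := by
  ext x
  constructor
  · rintro ⟨a, b, ha, hb, rfl⟩
    refine ⟨_, ⟨![a, b], ?_, rfl⟩, ?_⟩
    · simp [Pi.le_def, Fin.forall_fin_two, abs_le.1 ha, abs_le.1 hb]
    · simp [Fintype.linearCombination_apply, add_assoc]
  · rintro ⟨_, ⟨y, ⟨hl, hr⟩, rfl⟩, rfl⟩
    refine ⟨y 0, y 1, abs_le.2 ⟨hl 0, hr 0⟩, abs_le.2 ⟨hl 1, hr 1⟩, ?_⟩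
    simp [Fintype.linearCombination_apply, add_assoc]

lemma convex_parallelogram (q u v : E) : Convex ℝ (parallelogram q u v) := by
  rw [parallelogram_eq_image]
  exact ((convex_Icc _ _).linear_image _).translate q

lemma image_unitHexagon_subset {S : Set E} (hS : Convex ℝ S) {q u v : E}
    (hsymm : ∀ w, q + w ∈ S → q - w ∈ S) (hu : q + u ∈ S) (hv : q + v ∈ S)
    (huv : q + (u - v) ∈ S) :
    (q + ·) '' (Fintype.linearCombination ℝ ![u, v] '' unitHexagon) ⊆ S := by
  have hq : q ∈ S := center_mem_of_symm hS hsymm hu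
  have hnu := hsymm _ hu
  have hnv := hsymm _ hv
  have hvu := hsymm _ huv
  rw [sub_eq_add_neg] at hnu hnv hvu
  rintro _ ⟨_, ⟨x, ⟨⟨hl, hr⟩, hx⟩, rfl⟩, rfl⟩
  have hl₀ : -1 ≤ x 0 := hl 0
  have hl₁ : -1 ≤ x 1 := hl 1
  have hr₀ : x 0 ≤ 1 := hr 0
  have hr₁ : x 1 ≤ 1 := hr 1
  obtain ⟨hx₁, hx₂⟩ := abs_le.1 hx
  have mem_of_combination {y z : E} (hy : q + y ∈ S) (hz : q + z ∈ S) (s t : ℝ) (hs : 0 ≤ s)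
      (ht : 0 ≤ t) (hst : s + t ≤ 1) (h : x 0 • u + x 1 • v = s • y + t • z) :
      q + (x 0 • u + x 1 • v) ∈ S :=
    h ▸ add_smul_add_smul_mem_of_convex hS hq hy hz hs ht hst
  suffices q + (x 0 • u + x 1 • v) ∈ S by simpa [Fintype.linearCombination_apply]
  rcases le_total 0 (x 0) with h₀ | h₀ <;> rcases le_total 0 (x 1) with h₁ | h₁
  · exact mem_of_combination hu hv (x 0) (x 1) h₀ h₁ hx₂ rfl
  · rcases le_total 0 (x 0 + x 1) with h | h
    · exact mem_of_combination huv hu (-x 1) (x 0 + x 1) (by linarith) h (by linarith) (by module)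
    · exact mem_of_combination huv hnv (x 0) (-(x 0 + x 1)) h₀ (by linarith) (by linarith)
        (by module)
  · rcases le_total 0 (x 0 + x 1) with h | h
    · exact mem_of_combination hvu hv (-x 0) (x 0 + x 1) (by linarith) h (by linarith) (by module)
    · exact mem_of_combination hvu hnu (x 1) (-(x 0 + x 1)) h₁ (by linarith) (by linarith)
        (by module)
  · exact mem_of_combination hnu hnv (-x 0) (-x 1) (by linarith) (by linarith) (by linarith)
      (by module)

end Coordinates

variable {E : Type*} [NormedAddCommGroup E] [NormedSpace ℝ E] [FiniteDimensional ℝ E]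
  [MeasurableSpace E] [BorelSpace E] (μ : Measure E) [μ.IsAddHaarMeasure]

lemma exists_measure_image_linearCombination {ι : Type*} [Fintype ι] {b : ι → E}
    (hb : LinearIndependent ℝ b) (hcard : Fintype.card ι = Module.finrank ℝ E) :
    ∃ k : ℝ≥0∞, ∀ T : Set (ι → ℝ), μ (Fintype.linearCombination ℝ b '' T) = k * volume T := by
  have hinj := linearIndependent_iff_injective_fintypeLinearCombination.1 hb
  let L : (ι → ℝ) ≃L[ℝ] E :=
    (LinearEquiv.ofInjectiveOfFinrankEq _ hinj (by simpa using hcard)).toContinuousLinearEquiv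
  refine ⟨(μ.map L.symm).addHaarScalarFactor volume, fun T ↦ ?_⟩
  calc μ (L '' T) = μ.map L.symm T := by
        rw [L.image_eq_preimage_symm]
        exact (L.symm.toHomeomorph.toMeasurableEquiv.map_apply T).symm
    _ = _ := by
        conv_lhs => rw [Measure.isAddLeftInvariant_eq_smul (μ.map L.symm) volume]
        rfl

lemma measure_parallelogram_le (hE : Module.finrank ℝ E = 2) {q u v : E}
    (huv : LinearIndependent ℝ ![u, v]) {S : Set E} (hS : Convex ℝ S)
    (hsymm : ∀ w, q + w ∈ S → q - w ∈ S) (hu : q + u ∈ S) (hv : q + v ∈ S)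
    (hcorner : q + (u - v) ∈ S) :
    μ (parallelogram q u v) ≤ ENNReal.ofReal (4 / 3) * μ S := by
  obtain ⟨k, hk⟩ := exists_measure_image_linearCombination μ huv (by simp [hE])
  have hk' (T : Set (Fin 2 → ℝ)) :
      μ ((q + ·) '' (Fintype.linearCombination ℝ ![u, v] '' T)) = k * volume T := by
    rw [Set.image_add_left, measure_preimage_add, hk]
  calc μ (parallelogram q u v) = k * 4 := by
        rw [parallelogram_eq_image, hk', Real.volume_Icc_pi]
        norm_num
    _ = ENNReal.ofReal (4 / 3) * (k * 3) := by
        rw [mul_left_comm, ← ENNReal.ofReal_ofNat 3, ← ENNReal.ofReal_mul (by norm_num)]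
        norm_num
    _ ≤ ENNReal.ofReal (4 / 3) * (k * volume unitHexagon) := by
        gcongr
        exact three_le_volume_unitHexagon
    _ ≤ ENNReal.ofReal (4 / 3) * μ S := by
        rw [← hk']
        gcongr
        exact image_unitHexagon_subset hS hsymm hu hv hcorner

end Area

section Vertices

variable {E : Type*} [AddCommGroup E] [Module ℝ E] {p : Fin 6 → E} {c : E}

lemma opposite_vertex_sub (hsym : ∀ i, p (i + 3) = (2 : ℝ) • c - p i) (i : Fin 6) :
    p (i + 3) - c = -(p i - c) := by
  rw [hsym]
  module

lemma sub_mem_convexHull_of_add_mem (hsym : ∀ i, p (i + 3) = (2 : ℝ) • c - p i) (w : E)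
    (hw : c + w ∈ convexHull ℝ (Set.range p)) : c - w ∈ convexHull ℝ (Set.range p) := by
  let reflection : E →ᵃ[ℝ] E := AffineMap.const ℝ E ((2 : ℝ) • c) - AffineMap.id ℝ E
  have hrange : reflection '' Set.range p ⊆ Set.range p := by
    rintro _ ⟨_, ⟨i, rfl⟩, rfl⟩
    exact ⟨i + 3, hsym i⟩
  refine convexHull_mono hrange ?_
  rw [← reflection.image_convexHull]
  refine ⟨c + w, hw, ?_⟩
  simp only [reflection, AffineMap.coe_sub, AffineMap.coe_const, AffineMap.coe_id, Pi.sub_apply,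
    Function.const_apply, id_eq]
  module

lemma center_mem_convexHull_image_ne (hsym : ∀ i, p (i + 3) = (2 : ℝ) • c - p i) (i : Fin 6) :
    c ∈ convexHull ℝ (p '' {j | j ≠ i}) := by
  have h₁ : p (i + 1) ∈ convexHull ℝ (p '' {j | j ≠ i}) :=
    subset_convexHull ℝ _ ⟨i + 1, by simp, rfl⟩
  have h₄ : p (i + 1 + 3) ∈ convexHull ℝ (p '' {j | j ≠ i}) :=
    subset_convexHull ℝ _ ⟨i + 1 + 3, by simp [add_assoc], rfl⟩
  convert (convex_convexHull ℝ _).midpoint_mem h₁ h₄ using 1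
  rw [hsym, midpoint_eq_smul_add, add_sub_cancel, invOf_smul_smul]

lemma one_lt_add_of_vertex_sub_eq (hvert : ∀ i, p i ∉ convexHull ℝ (p '' {j | j ≠ i}))
    (hsym : ∀ i, p (i + 3) = (2 : ℝ) • c - p i) {i j k : Fin 6} (hj : j ≠ i) (hk : k ≠ i)
    {s t : ℝ} (hs : 0 ≤ s) (ht : 0 ≤ t) (h : p i - c = s • (p j - c) + t • (p k - c)) :
    1 < s + t := by
  by_contra! hst
  have mem_of_ne {l : Fin 6} (hl : l ≠ i) : c + (p l - c) ∈ convexHull ℝ (p '' {j | j ≠ i}) := by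
    rw [add_sub_cancel]
    exact subset_convexHull ℝ _ ⟨l, hl, rfl⟩
  have hmem := add_smul_add_smul_mem_of_convex (convex_convexHull ℝ _)
    (center_mem_convexHull_image_ne hsym i) (mem_of_ne hj) (mem_of_ne hk) hs ht hst
  rw [← h, add_sub_cancel] at hmem
  exact hvert i hmem

lemma lt_add_of_smul_vertex_sub_eq (hvert : ∀ i, p i ∉ convexHull ℝ (p '' {j | j ≠ i}))
    (hsym : ∀ i, p (i + 3) = (2 : ℝ) • c - p i) {i j k : Fin 6} (hj : j ≠ i) (hk : k ≠ i)
    {r s t : ℝ} (hr : 0 < r) (hs : 0 ≤ s) (ht : 0 ≤ t)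
    (h : r • (p i - c) = s • (p j - c) + t • (p k - c)) : r < s + t := by
  have hdiv : p i - c = (s / r) • (p j - c) + (t / r) • (p k - c) := by
    rw [← inv_smul_smul₀ hr.ne' (p i - c), h]
    module
  have hone := one_lt_add_of_vertex_sub_eq hvert hsym hj hk (div_nonneg hs hr.le)
    (div_nonneg ht hr.le) hdiv
  rwa [← add_div, one_lt_div hr] at hone

lemma linearIndependent_vertex_sub (hvert : ∀ i, p i ∉ convexHull ℝ (p '' {j | j ≠ i}))
    (hsym : ∀ i, p (i + 3) = (2 : ℝ) • c - p i) {i j : Fin 6} (hij : j ≠ i) (hij' : j + 3 ≠ i) :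
    LinearIndependent ℝ ![p i - c, p j - c] := by
  have notMem {i j : Fin 6} (hij : j ≠ i) (hij' : j + 3 ≠ i) :
      p i - c ∉ segment ℝ (-(p j - c)) (p j - c) := by
    rw [← opposite_vertex_sub hsym]
    rintro ⟨s, t, hs, ht, hst, h⟩
    exact (one_lt_add_of_vertex_sub_eq hvert hsym hij' hij hs ht h.symm).ne' hst
  refine linearIndependent_pair_of_notMem_segment (notMem hij hij') (notMem hij.symm ?_)
  rintro rfl
  exact hij' (by simp [add_assoc])

end Vertices

section Edges

variable {E : Type*} [NormedAddCommGroup E] [NormedSpace ℝ E] {p : Fin 6 → E} {c : E}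

lemma center_mem_interior_convexHull (hE : Module.finrank ℝ E = 2)
    (hvert : ∀ i, p i ∉ convexHull ℝ (p '' {j | j ≠ i}))
    (hsym : ∀ i, p (i + 3) = (2 : ℝ) • c - p i) : c ∈ interior (convexHull ℝ (Set.range p)) := by
  have := FiniteDimensional.of_finrank_eq_succ hE
  have hconv := convex_convexHull ℝ (Set.range p)
  have hsymm := sub_mem_convexHull_of_add_mem hsym
  have hmem (i : Fin 6) : c + (p i - c) ∈ convexHull ℝ (Set.range p) := by
    rw [add_sub_cancel]
    exact subset_convexHull ℝ _ ⟨i, rfl⟩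
  have hli : LinearIndependent ℝ ![p 0 - c, p 1 - c] :=
    linearIndependent_vertex_sub hvert hsym (by decide) (by decide)
  refine center_mem_interior_of_symm hconv hsymm
    (interior_nonempty_of_linearIndependent hconv (center_mem_of_symm hconv hsymm (hmem 0)) hli
      (by simp [hE]) ?_)
  simpa only [Fin.forall_fin_two] using ⟨hmem 0, hmem 1⟩

lemma vertex_sub_ne_smul_add_smul_of_edge (hE : Module.finrank ℝ E = 2)
    (hvert : ∀ i, p i ∉ convexHull ℝ (p '' {j | j ≠ i}))
    (hcyc : ∀ i, segment ℝ (p i) (p (i + 1)) ⊆ frontier (convexHull ℝ (Set.range p)))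
    (hsym : ∀ i, p (i + 3) = (2 : ℝ) • c - p i) {i j : Fin 6} (hi : i ≠ j) (hi' : i + 1 ≠ j)
    {s t : ℝ} (hs : 0 ≤ s) (ht : 0 ≤ t) : p j - c ≠ s • (p i - c) + t • (p (i + 1) - c) := by
  intro h
  refine (one_lt_add_of_vertex_sub_eq hvert hsym hi hi' hs ht h).not_ge
    (add_le_one_of_segment_subset_frontier (convex_convexHull ℝ _)
      (center_mem_interior_convexHull hE hvert hsym) (hcyc i) hs ht ?_)
  rw [← h, add_sub_cancel]
  exact subset_convexHull ℝ _ ⟨j, rfl⟩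

lemma exists_pos_vertex_relation (hE : Module.finrank ℝ E = 2)
    (hvert : ∀ i, p i ∉ convexHull ℝ (p '' {j | j ≠ i}))
    (hcyc : ∀ i, segment ℝ (p i) (p (i + 1)) ⊆ frontier (convexHull ℝ (Set.range p)))
    (hsym : ∀ i, p (i + 3) = (2 : ℝ) • c - p i) :
    ∃ x y z : ℝ, 0 < x ∧ 0 < y ∧ 0 < z ∧ z • (p 1 - c) = y • (p 0 - c) + x • (p 2 - c) := by
  have := FiniteDimensional.of_finrank_eq_succ hE
  have hli : LinearIndependent ℝ ![p 0 - c, p 1 - c] :=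
    linearIndependent_vertex_sub hvert hsym (by decide) (by decide)
  have hspan : p 2 - c ∈ Submodule.span ℝ {p 0 - c, p 1 - c} := by
    have htop := hli.span_eq_top_of_card_eq_finrank' (by simp [hE])
    rw [Matrix.range_cons_cons_empty] at htop
    exact htop ▸ Submodule.mem_top
  obtain ⟨s, t, hst⟩ := Submodule.mem_span_pair.1 hspan
  have h₅ : p 5 - c = -(p 2 - c) := opposite_vertex_sub hsym 2
  have not_nonneg (hs : 0 ≤ s) (ht : 0 ≤ t) : False :=
    vertex_sub_ne_smul_add_smul_of_edge hE hvert hcyc hsym (i := 0) (j := 2) (by decide)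
      (by decide) hs ht hst.symm
  have not_nonpos (hs : s ≤ 0) (ht : t ≤ 0) : False :=
    vertex_sub_ne_smul_add_smul_of_edge hE hvert hcyc hsym (i := 0) (j := 5) (by decide) (by decide)
      (neg_nonneg.2 hs) (neg_nonneg.2 ht) (by rw [h₅, ← hst, zero_add]; module)
  have not_pos_left (hs : 0 < s) (ht : t ≤ 0) : False := by
    refine vertex_sub_ne_smul_add_smul_of_edge hE hvert hcyc hsym (i := 1) (j := 0) (by decide)
      (by decide) (s := -t / s) (t := 1 / s) (div_nonneg (neg_nonneg.2 ht) hs.le)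
      (by positivity) ?_
    change p 0 - c = (-t / s) • (p 1 - c) + (1 / s) • (p 2 - c)
    rw [← hst]
    match_scalars <;> field_simp <;> ring
  have hs : s < 0 := by grind
  have ht : 0 < t := by grind
  exact ⟨1, -s, t, one_pos, neg_pos.2 hs, ht, by rw [← hst]; module⟩

end Edges

/-- `IsCornerFrame p c u v α β k`: in the affine frame with origin `c` and basis `(u, v)`, the
vertices `p k`, `p (k + 1)`, `p (k + 2)` are `(-α, -1)`, `(1, -1)`, `(1, β)` with `α, β ∈ [0, 1]`.
Thus extending the sides at `p (k + 1)` and their opposites gives the parallelogram `c ± u ± v`. -/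
structure IsCornerFrame {E : Type*} [AddCommGroup E] [Module ℝ E] (p : Fin 6 → E) (c u v : E)
    (α β : ℝ) (k : Fin 6) : Prop where
  linearIndependent : LinearIndependent ℝ ![u, v]
  left_mem_Icc : α ∈ Set.Icc 0 1
  right_mem_Icc : β ∈ Set.Icc 0 1
  apply_self : p k = c - v + (-α) • u
  apply_add_one : p (k + 1) = c + u - v
  apply_add_two : p (k + 2) = c + u + β • v

section Frame

variable {E : Type*} [AddCommGroup E] [Module ℝ E] {p : Fin 6 → E} {c u v : E} {α β : ℝ}
  {k : Fin 6}

lemma exists_smallest_vertex_relation (hsym : ∀ i, p (i + 3) = (2 : ℝ) • c - p i)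
    {x y z : ℝ} (hx : 0 < x) (hy : 0 < y) (hz : 0 < z)
    (h : z • (p 1 - c) = y • (p 0 - c) + x • (p 2 - c)) :
    ∃ (k : Fin 6) (x y z : ℝ), 0 < z ∧ z ≤ x ∧ z ≤ y ∧
      z • (p (k + 1) - c) = y • (p k - c) + x • (p (k + 2) - c) := by
  have h₃ : p 3 - c = -(p 0 - c) := opposite_vertex_sub hsym 0
  have h₄ : p 4 - c = -(p 1 - c) := opposite_vertex_sub hsym 1
  have h₁₂₃ : x • (p 2 - c) = z • (p 1 - c) + y • (p 3 - c) := by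
    rw [h, h₃]
    module
  have h₂₃₄ : y • (p 3 - c) = x • (p 2 - c) + z • (p 4 - c) := by
    rw [h₃, h₄, smul_neg z, h]
    module
  obtain ⟨hzx, hzy⟩ | ⟨hxz, hxy⟩ | ⟨hyz, hyx⟩ :
      (z ≤ x ∧ z ≤ y) ∨ (x ≤ z ∧ x ≤ y) ∨ (y ≤ z ∧ y ≤ x) := by grind
  · exact ⟨0, x, y, z, hz, hzx, hzy, h⟩
  · exact ⟨1, y, z, x, hx, hxy, hxz, h₁₂₃⟩
  · exact ⟨2, z, x, y, hy, hyz, hyx, h₂₃₄⟩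

lemma lt_add_of_vertex_relation (hvert : ∀ i, p i ∉ convexHull ℝ (p '' {j | j ≠ i}))
    (hsym : ∀ i, p (i + 3) = (2 : ℝ) • c - p i) {x y z : ℝ} (hx : 0 < x) (hy : 0 < y) (hz : 0 < z)
    (h : z • (p (k + 1) - c) = y • (p k - c) + x • (p (k + 2) - c)) : x < z + y ∧ y < z + x := by
  have h₃ := opposite_vertex_sub hsym k
  have h₅ := opposite_vertex_sub hsym (k + 2)
  constructor
  · refine lt_add_of_smul_vertex_sub_eq hvert hsym (i := k + 2) (j := k + 1) (k := k + 3)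
      (by simp) (by simp) hx hz.le hy.le ?_
    rw [h, h₃]
    module
  · refine lt_add_of_smul_vertex_sub_eq hvert hsym (i := k) (j := k + 1) (k := k + 2 + 3)
      (by simp) (by simp [add_assoc]) hy hz.le hx.le ?_
    rw [h, h₅]
    module

lemma exists_isCornerFrame_of_vertex_relation
    (hvert : ∀ i, p i ∉ convexHull ℝ (p '' {j | j ≠ i}))
    (hsym : ∀ i, p (i + 3) = (2 : ℝ) • c - p i) {x y z : ℝ} (hz : 0 < z) (hzx : z ≤ x)
    (hzy : z ≤ y) (h : z • (p (k + 1) - c) = y • (p k - c) + x • (p (k + 2) - c)) :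
    ∃ u v, IsCornerFrame p c u v ((x - z) / y) ((y - z) / x) k := by
  have hx : 0 < x := hz.trans_le hzx
  have hy : 0 < y := hz.trans_le hzy
  obtain ⟨hxzy, hyzx⟩ := lt_add_of_vertex_relation hvert hsym hx hy hz h
  have hD : 0 < x + y - z := by linarith
  let u := (y / (x + y - z)) • (p (k + 1) - p k)
  let v := (x / (x + y - z)) • (p (k + 2) - p (k + 1))
  have hcorner : p (k + 1) - c = (1 : ℝ) • u + (-1 : ℝ) • v := by
    refine smul_right_injective E hD.ne' ?_
    change (x + y - z) • (p (k + 1) - c) = (x + y - z) • ((1 : ℝ) • u + (-1 : ℝ) • v)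
    rw [sub_smul, h]
    simp only [u, v]
    match_scalars <;> field_simp <;> ring
  have hleft : p k - c = (-((x - z) / y)) • u + (-1 : ℝ) • v := by
    rw [← sub_sub_sub_cancel_left c (p k) (p (k + 1)), hcorner]
    simp only [u, v]
    match_scalars <;> field_simp <;> ring
  have hright : p (k + 2) - c = (1 : ℝ) • u + ((y - z) / x) • v := by
    rw [← sub_add_sub_cancel (p (k + 2)) (p (k + 1)) c, hcorner]
    simp only [u, v]
    match_scalars <;> field_simp <;> ring
  have hli : LinearIndependent ℝ ![p k - c, p (k + 1) - c] :=
    linearIndependent_vertex_sub hvert hsym (by simp) (by simp [add_assoc])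
  rw [hleft, hcorner] at hli
  exact ⟨u, v, (LinearIndependent.pair_add_smul_add_smul_iff ..).1 hli |>.1,
    ⟨div_nonneg (sub_nonneg.2 hzx) hy.le, (div_le_one hy).2 (by linarith)⟩,
    ⟨div_nonneg (sub_nonneg.2 hzy) hx.le, (div_le_one hx).2 (by linarith)⟩,
    (sub_eq_iff_eq_add.1 hleft).trans (by module), (sub_eq_iff_eq_add.1 hcorner).trans (by module),
    (sub_eq_iff_eq_add.1 hright).trans (by module)⟩

namespace IsCornerFrame

lemma apply_add_three (h : IsCornerFrame p c u v α β k)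
    (hsym : ∀ i, p (i + 3) = (2 : ℝ) • c - p i) : p (k + 3) = c + v + α • u := by
  rw [hsym, h.apply_self]
  module

lemma apply_add_four (h : IsCornerFrame p c u v α β k)
    (hsym : ∀ i, p (i + 3) = (2 : ℝ) • c - p i) : p (k + 4) = c - u + v := by
  rw [show k + 4 = k + 1 + 3 by rw [add_assoc]; rfl, hsym, h.apply_add_one]
  module

lemma apply_add_five (h : IsCornerFrame p c u v α β k)
    (hsym : ∀ i, p (i + 3) = (2 : ℝ) • c - p i) : p (k + 5) = c - u + (-β) • v := by
  rw [show k + 5 = k + 2 + 3 by rw [add_assoc]; rfl, hsym, h.apply_add_two]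
  module

lemma convexHull_subset_parallelogram (h : IsCornerFrame p c u v α β k)
    (hsym : ∀ i, p (i + 3) = (2 : ℝ) • c - p i) :
    convexHull ℝ (Set.range p) ⊆ parallelogram c u v := by
  refine convexHull_min ?_ (convex_parallelogram c u v)
  have hα : |α| ≤ 1 := by rw [abs_of_nonneg h.left_mem_Icc.1]; exact h.left_mem_Icc.2
  have hβ : |β| ≤ 1 := by rw [abs_of_nonneg h.right_mem_Icc.1]; exact h.right_mem_Icc.2
  rintro _ ⟨j, rfl⟩
  obtain ⟨i, rfl⟩ : ∃ i, j = k + i := ⟨j - k, by abel⟩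
  fin_cases i
  · refine ⟨-α, -1, by simpa, by simp, ?_⟩
    exact (congrArg p (add_zero k)).trans (h.apply_self.trans (by module))
  · exact ⟨1, -1, by simp, by simp, h.apply_add_one.trans (by module)⟩
  · exact ⟨1, β, by simp, hβ, h.apply_add_two.trans (by module)⟩
  · exact ⟨α, 1, hα, by simp, (h.apply_add_three hsym).trans (by module)⟩
  · exact ⟨-1, 1, by simp, by simp, (h.apply_add_four hsym).trans (by module)⟩
  · exact ⟨-1, -β, by simp, by simpa, (h.apply_add_five hsym).trans (by module)⟩

lemma add_fst_mem_convexHull (h : IsCornerFrame p c u v α β k) :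
    c + u ∈ convexHull ℝ (Set.range p) := by
  refine segment_subset_convexHull (Set.mem_range_self (k + 1)) (Set.mem_range_self (k + 2)) ?_
  rw [h.apply_add_one, h.apply_add_two, sub_eq_add_neg _ v, ← neg_one_smul ℝ v]
  exact mem_segment_add_smul_add_smul (c + u) v (by norm_num) h.right_mem_Icc.1

lemma sub_snd_mem_convexHull (h : IsCornerFrame p c u v α β k) :
    c - v ∈ convexHull ℝ (Set.range p) := by
  refine segment_subset_convexHull (Set.mem_range_self k) (Set.mem_range_self (k + 1)) ?_
  rw [h.apply_self, h.apply_add_one, add_sub_right_comm]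
  simpa using mem_segment_add_smul_add_smul (c - v) u (neg_nonpos.2 h.left_mem_Icc.1) zero_le_one

lemma add_snd_mem_convexHull (h : IsCornerFrame p c u v α β k)
    (hsym : ∀ i, p (i + 3) = (2 : ℝ) • c - p i) : c + v ∈ convexHull ℝ (Set.range p) := by
  have hsub : c + -v ∈ convexHull ℝ (Set.range p) := sub_eq_add_neg c v ▸ h.sub_snd_mem_convexHull
  exact sub_neg_eq_add c v ▸ sub_mem_convexHull_of_add_mem hsym (-v) hsub

lemma add_fst_sub_snd_mem_convexHull (h : IsCornerFrame p c u v α β k) :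
    c + (u - v) ∈ convexHull ℝ (Set.range p) := by
  rw [← add_sub_assoc, ← h.apply_add_one]
  exact subset_convexHull ℝ _ ⟨k + 1, rfl⟩

lemma add_snd_side_subset (h : IsCornerFrame p c u v α β k)
    (hsym : ∀ i, p (i + 3) = (2 : ℝ) • c - p i) :
    {x | ∃ a : ℝ, |a| ≤ 1 ∧ x = c + a • u + v} ⊆ (line[ℝ, p (k + 3), p (k + 3 + 1)] : Set E) := by
  rintro _ ⟨a, -, rfl⟩
  have hα : α ≠ -1 := by linarith [h.left_mem_Icc.1]
  rw [add_right_comm c, add_assoc k]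
  exact add_smul_mem_affineSpan_pair hα (h.apply_add_three hsym)
    ((h.apply_add_four hsym).trans (by module)) a

lemma sub_snd_side_subset (h : IsCornerFrame p c u v α β k) :
    {x | ∃ a : ℝ, |a| ≤ 1 ∧ x = c + a • u - v} ⊆ (line[ℝ, p k, p (k + 1)] : Set E) := by
  rintro _ ⟨a, -, rfl⟩
  have hα : -α ≠ 1 := by linarith [h.left_mem_Icc.1]
  rw [add_sub_right_comm]
  exact add_smul_mem_affineSpan_pair hα h.apply_self (h.apply_add_one.trans (by module)) a

lemma add_fst_side_subset (h : IsCornerFrame p c u v α β k) :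
    {x | ∃ b : ℝ, |b| ≤ 1 ∧ x = c + u + b • v} ⊆ (line[ℝ, p (k + 1), p (k + 1 + 1)] : Set E) := by
  rintro _ ⟨b, -, rfl⟩
  have hβ : -1 ≠ β := by linarith [h.right_mem_Icc.1]
  rw [add_assoc k]
  exact add_smul_mem_affineSpan_pair hβ (h.apply_add_one.trans (by module)) h.apply_add_two b

lemma sub_fst_side_subset (h : IsCornerFrame p c u v α β k)
    (hsym : ∀ i, p (i + 3) = (2 : ℝ) • c - p i) :
    {x | ∃ b : ℝ, |b| ≤ 1 ∧ x = c - u + b • v} ⊆ (line[ℝ, p (k + 4), p (k + 4 + 1)] : Set E) := by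
  rintro _ ⟨b, -, rfl⟩
  have hβ : 1 ≠ -β := by linarith [h.right_mem_Icc.1]
  rw [add_assoc k]
  exact add_smul_mem_affineSpan_pair hβ ((h.apply_add_four hsym).trans (by module))
    (h.apply_add_five hsym) b

end IsCornerFrame

end Frame

lemma exists_isCornerFrame {E : Type*} [NormedAddCommGroup E] [NormedSpace ℝ E] {p : Fin 6 → E}
    {c : E} (hE : Module.finrank ℝ E = 2) (hvert : ∀ i, p i ∉ convexHull ℝ (p '' {j | j ≠ i}))
    (hcyc : ∀ i, segment ℝ (p i) (p (i + 1)) ⊆ frontier (convexHull ℝ (Set.range p)))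
    (hsym : ∀ i, p (i + 3) = (2 : ℝ) • c - p i) :
    ∃ (u v : E) (α β : ℝ) (k : Fin 6), IsCornerFrame p c u v α β k := by
  obtain ⟨x, y, z, hx, hy, hz, h⟩ := exists_pos_vertex_relation hE hvert hcyc hsym
  obtain ⟨k, x, y, z, hz, hzx, hzy, h⟩ := exists_smallest_vertex_relation hsym hx hy hz h
  obtain ⟨u, v, huv⟩ := exists_isCornerFrame_of_vertex_relation hvert hsym hz hzx hzy h
  exact ⟨u, v, _, _, k, huv⟩

theorem symmetric_hexagon_in_parallelogram_general {E : Type*} [NormedAddCommGroup E]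
    [NormedSpace ℝ E] [MeasurableSpace E] [BorelSpace E] (hE : Module.finrank ℝ E = 2)
    (μ : Measure E) [μ.IsAddHaarMeasure] {p : Fin 6 → E} {c : E}
    (hvert : ∀ i, p i ∉ convexHull ℝ (p '' {j | j ≠ i}))
    (hcyc : ∀ i, segment ℝ (p i) (p (i + 1)) ⊆ frontier (convexHull ℝ (Set.range p)))
    (hsym : ∀ i, p (i + 3) = (2 : ℝ) • c - p i) :
    ∃ (q u v : E), LinearIndependent ℝ ![u, v] ∧
      convexHull ℝ (Set.range p) ⊆ parallelogram q u v ∧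
      μ (parallelogram q u v) ≤ ENNReal.ofReal (4 / 3) * μ (convexHull ℝ (Set.range p)) ∧
      (∃ i : Fin 6, {x | ∃ a : ℝ, |a| ≤ 1 ∧ x = q + a • u + v} ⊆
        (line[ℝ, p i, p (i + 1)] : Set E)) ∧
      (∃ i : Fin 6, {x | ∃ a : ℝ, |a| ≤ 1 ∧ x = q + a • u - v} ⊆
        (line[ℝ, p i, p (i + 1)] : Set E)) ∧
      (∃ i : Fin 6, {x | ∃ b : ℝ, |b| ≤ 1 ∧ x = q + u + b • v} ⊆
        (line[ℝ, p i, p (i + 1)] : Set E)) ∧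
      (∃ i : Fin 6, {x | ∃ b : ℝ, |b| ≤ 1 ∧ x = q - u + b • v} ⊆
        (line[ℝ, p i, p (i + 1)] : Set E)) := by
  have := FiniteDimensional.of_finrank_eq_succ hE
  obtain ⟨u, v, α, β, k, h⟩ := exists_isCornerFrame hE hvert hcyc hsym
  refine ⟨c, u, v, h.linearIndependent, h.convexHull_subset_parallelogram hsym, ?_,
    ⟨k + 3, h.add_snd_side_subset hsym⟩, ⟨k, h.sub_snd_side_subset⟩,
    ⟨k + 1, h.add_fst_side_subset⟩, ⟨k + 4, h.sub_fst_side_subset hsym⟩⟩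
  exact measure_parallelogram_le μ hE h.linearIndependent (convex_convexHull ℝ _)
    (sub_mem_convexHull_of_add_mem hsym) h.add_fst_mem_convexHull
    (h.add_snd_mem_convexHull hsym) h.add_fst_sub_snd_mem_convexHull

/-- Every centrally symmetric convex hexagon `H` (convex hull of six distinct vertices
`p 0, …, p 5` in strictly convex cyclic position, with `p (i+3) = 2c - p i`) is contained
in a parallelogram `P` of area at most `4/3` times the area of `H`, whose sides lie on
lines extending sides of `H`. -/
theorem symmetric_hexagon_in_parallelogram
    (p : Fin 6 → EuclideanSpace ℝ (Fin 2)) (c : EuclideanSpace ℝ (Fin 2))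
    (hvert : ∀ i, p i ∉ convexHull ℝ (p '' {j | j ≠ i}))
    (hcyc : ∀ i, segment ℝ (p i) (p (i + 1)) ⊆ frontier (convexHull ℝ (Set.range p)))
    (hsym : ∀ i, p (i + 3) = (2 : ℝ) • c - p i) :
    ∃ (q u v : EuclideanSpace ℝ (Fin 2)), LinearIndependent ℝ ![u, v] ∧
      convexHull ℝ (Set.range p) ⊆
        {x | ∃ a b : ℝ, |a| ≤ 1 ∧ |b| ≤ 1 ∧ x = q + a • u + b • v} ∧
      volume {x | ∃ a b : ℝ, |a| ≤ 1 ∧ |b| ≤ 1 ∧ x = q + a • u + b • v} ≤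
        (ENNReal.ofReal (4 / 3)) * volume (convexHull ℝ (Set.range p)) ∧
      (∃ i : Fin 6, {x | ∃ a : ℝ, |a| ≤ 1 ∧ x = q + a • u + v} ⊆
          (affineSpan ℝ {p i, p (i + 1)} : Set (EuclideanSpace ℝ (Fin 2)))) ∧
      (∃ i : Fin 6, {x | ∃ a : ℝ, |a| ≤ 1 ∧ x = q + a • u - v} ⊆
          (affineSpan ℝ {p i, p (i + 1)} : Set (EuclideanSpace ℝ (Fin 2)))) ∧
      (∃ i : Fin 6, {x | ∃ b : ℝ, |b| ≤ 1 ∧ x = q + u + b • v} ⊆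
          (affineSpan ℝ {p i, p (i + 1)} : Set (EuclideanSpace ℝ (Fin 2)))) ∧
      (∃ i : Fin 6, {x | ∃ b : ℝ, |b| ≤ 1 ∧ x = q - u + b • v} ⊆
          (affineSpan ℝ {p i, p (i + 1)} : Set (EuclideanSpace ℝ (Fin 2)))) :=
  symmetric_hexagon_in_parallelogram_general (by simp) volume hvert hcyc hsym
end
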